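/- arXiv:1504.01029 — 5 statements merged into one kernel-verified Lean document; each statement's English description precedes it below -/
import Mathlib

section
/- Let W_b = Q + T_b (for each bipartition {b|b̄} of the k subsystems) be Hermitian operators on (ℂ^d)^{⊗k} such that Tr(W_b σ) ≥ 0 for every state σ that is separable across the bipartition {b|b̄}, where Q is a Hermitian operator common to all bipartitions. Then the operator W_GME := Q + Σ_b [T_b]_+ satisfies W_GME ≥ W_b (in the positive-semidefinite order) for every bipartition b, and consequently Tr(W_GME σ) ≥ 0 for every biseparable state σ. -/
/-!
By the spectral theorem, `[T]_+` and `[T]_+ - T` are diagonal in the eigenbasis of `T` with the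
nonnegative eigenvalues `max λ 0` and `max λ 0 - λ`, so both are positive semidefinite
(`matPosPart_posSemidef`, `matPosPart_sub_posSemidef`). Hence
`W_GME - W_b = ([T_b]_+ - T_b) + ∑_{b' ≠ b} [T_{b'}]_+` is a sum of positive semidefinite matrices.

For the trace claim, a positive semidefinite `P` satisfies `Tr(P |v⟩⟨v|) = ⟨v|P|v⟩ ≥ 0`, and
`{M | 0 ≤ Re Tr(P M)}` is a half-space, so `Re Tr(P σ) ≥ 0` for all `σ` separable across `b`
(`re_trace_mul_nonneg_of_sepAcross`). With `P = W_GME - W_b` this gives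
`Re Tr(W_GME σ) ≥ Re Tr(W_b σ) ≥ 0` on each `S_b`, and the same half-space argument extends the
inequality to the convex hull of their union.
-/

open scoped ComplexOrder

noncomputable section

/-- Index type for `(ℂ^d)^{⊗ k}`. -/
abbrev MIdx (k d : ℕ) := Fin k → Fin d

/-- Operators on `(ℂ^d)^{⊗ k}`. -/
abbrev MOp (k d : ℕ) := Matrix (MIdx k d) (MIdx k d) ℂ

/-- A bipartition of the `k` subsystems is a nonempty proper subset. -/
def IsBipartition {k : ℕ} (b : Finset (Fin k)) : Prop := b.Nonempty ∧ b ≠ Finset.univ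

/-- The finset of all bipartitions. -/
def bipartitions (k : ℕ) : Finset (Finset (Fin k)) :=
  Finset.univ.filter fun b => b.Nonempty ∧ b ≠ Finset.univ

/-- Index type of the subsystems in `b`. -/
abbrev SubIdx {k : ℕ} (d : ℕ) (b : Finset (Fin k)) := {i : Fin k // i ∈ b} → Fin d

/-- Index type of the subsystems in the complement of `b`. -/
abbrev CoIdx {k : ℕ} (d : ℕ) (b : Finset (Fin k)) := {i : Fin k // i ∉ b} → Fin d

def restr {k d : ℕ} (b : Finset (Fin k)) (x : MIdx k d) : SubIdx d b := fun i => x i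
def corestr {k d : ℕ} (b : Finset (Fin k)) (x : MIdx k d) : CoIdx d b := fun i => x i

/-- The pure product state `|φ⟩⟨φ| ⊗ |ψ⟩⟨ψ|` across the bipartition `{b|b̄}`. -/
def prodPure {k d : ℕ} (b : Finset (Fin k)) (φ : SubIdx d b → ℂ) (ψ : CoIdx d b → ℂ) :
    MOp k d := fun x y =>
  φ (restr b x) * ψ (corestr b x) * star (φ (restr b y)) * star (ψ (corestr b y))

/-- States separable across the bipartition `{b|b̄}`. -/
def SepAcross {k : ℕ} (d : ℕ) (b : Finset (Fin k)) : Set (MOp k d) :=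
  convexHull ℝ {M | ∃ (φ : SubIdx d b → ℂ) (ψ : CoIdx d b → ℂ),
    (∑ x, ‖φ x‖ ^ 2 = 1) ∧ (∑ y, ‖ψ y‖ ^ 2 = 1) ∧ M = prodPure b φ ψ}

/-- Biseparable states: the convex hull of the union of the separable sets over all
bipartitions. -/
def Biseparable (k d : ℕ) : Set (MOp k d) :=
  convexHull ℝ (⋃ b ∈ bipartitions k, SepAcross d b)

/-- A state: positive semidefinite with unit trace. -/
def IsState {n : Type*} [Fintype n] (ρ : Matrix n n ℂ) : Prop :=
  ρ.PosSemidef ∧ ρ.trace = 1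

/-- The positive part `[A]_+` of a Hermitian matrix `A` (junk value `0` otherwise). -/
noncomputable def matPosPart {n : Type*} [Fintype n] [DecidableEq n] (A : Matrix n n ℂ) :
    Matrix n n ℂ :=
  if hA : A.IsHermitian then
    (hA.eigenvectorUnitary : Matrix n n ℂ) *
      Matrix.diagonal (fun i => ((max (hA.eigenvalues i) 0 : ℝ) : ℂ)) *
      star (hA.eigenvectorUnitary : Matrix n n ℂ)
  else 0

/-- `A ⪰ B` in the positive semidefinite (Loewner) order. -/
def Loewner {n : Type*} [Fintype n] (A B : Matrix n n ℂ) : Prop := (A - B).PosSemidef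

end

theorem matPosPart_posSemidef {n : Type*} [Fintype n] [DecidableEq n] (A : Matrix n n ℂ) :
    (matPosPart A).PosSemidef := by
  unfold matPosPart
  split_ifs with hA
  · rw [Matrix.star_eq_conjTranspose]
    refine Matrix.PosSemidef.mul_mul_conjTranspose_same (Matrix.PosSemidef.diagonal ?_) _
    intro i
    exact Complex.zero_le_real.mpr (le_max_right _ _)
  · exact Matrix.PosSemidef.zero

theorem matPosPart_sub_posSemidef {n : Type*} [Fintype n] [DecidableEq n] {A : Matrix n n ℂ}
    (hA : A.IsHermitian) : (matPosPart A - A).PosSemidef := by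
  have hdiff : matPosPart A - A = (hA.eigenvectorUnitary : Matrix n n ℂ) *
      Matrix.diagonal (fun i => ((max (hA.eigenvalues i) 0 - hA.eigenvalues i : ℝ) : ℂ)) *
      (hA.eigenvectorUnitary : Matrix n n ℂ).conjTranspose := by
    have hspec : A = (hA.eigenvectorUnitary : Matrix n n ℂ) *
        Matrix.diagonal (fun i => ((hA.eigenvalues i : ℝ) : ℂ)) *
        star (hA.eigenvectorUnitary : Matrix n n ℂ) := by
      have h := hA.spectral_theorem
      rw [Unitary.conjStarAlgAut_apply] at h
      exact h
    have hsub : Matrix.diagonal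
          (fun i => ((max (hA.eigenvalues i) 0 - hA.eigenvalues i : ℝ) : ℂ)) =
        Matrix.diagonal (fun i => ((max (hA.eigenvalues i) 0 : ℝ) : ℂ)) -
          Matrix.diagonal (fun i => ((hA.eigenvalues i : ℝ) : ℂ)) := by
      rw [Matrix.diagonal_sub]
      simp only [Complex.ofReal_sub]
    rw [hsub, mul_sub, sub_mul, ← Matrix.star_eq_conjTranspose, ← hspec, matPosPart, dif_pos hA]
  rw [hdiff]
  refine Matrix.PosSemidef.mul_mul_conjTranspose_same (Matrix.PosSemidef.diagonal ?_) _
  intro i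
  exact Complex.zero_le_real.mpr (sub_nonneg.mpr (le_max_left _ _))

theorem convex_re_trace_mul_nonneg {n : Type*} [Fintype n] (P : Matrix n n ℂ) :
    Convex ℝ {M : Matrix n n ℂ | 0 ≤ ((P * M).trace).re} := by
  intro M hM N hN s t hs ht _
  simp only [Set.mem_ofPred_eq] at hM hN ⊢
  rw [mul_add, Matrix.mul_smul, Matrix.mul_smul, Matrix.trace_add, Matrix.trace_smul,
    Matrix.trace_smul, Complex.add_re, Complex.smul_re, Complex.smul_re, smul_eq_mul, smul_eq_mul]
  positivity

theorem re_trace_mul_nonneg_of_sepAcross {k d : ℕ} {b : Finset (Fin k)} {P σ : MOp k d}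
    (hP : P.PosSemidef) (hσ : σ ∈ SepAcross d b) : 0 ≤ ((P * σ).trace).re := by
  refine convexHull_min ?_ (convex_re_trace_mul_nonneg P) hσ
  rintro _ ⟨φ, ψ, -, -, rfl⟩
  -- The product state is the rank-one matrix `|v⟩⟨v|` with `v = φ ⊗ ψ`.
  have hrank : prodPure b φ ψ = Matrix.vecMulVec (fun x => φ (restr b x) * ψ (corestr b x))
      (star fun x => φ (restr b x) * ψ (corestr b x)) := by
    ext x y
    simp only [prodPure, Matrix.vecMulVec_apply, Pi.star_apply, star_mul']
    ring
  rw [Set.mem_ofPred_eq, hrank, Matrix.mul_vecMulVec, Matrix.trace_vecMulVec, dotProduct_comm]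
  exact (Complex.nonneg_iff.mp (hP.dotProduct_mulVec_nonneg _)).1

/-- If `W_b = Q + T_b` is, for each bipartition `{b|b̄}`, a Hermitian
operator which is nonnegative on all states separable across `{b|b̄}`, then
`W_GME = Q + ∑_b [T_b]_+` satisfies `W_GME ≥ W_b` for every bipartition `b`, and
consequently `Tr(W_GME σ) ≥ 0` for every biseparable state `σ`. -/
theorem lifted_witness_dominates_and_is_GME_witness
    (k d : ℕ) (hk : 2 ≤ k) (hd : 2 ≤ d)
    (Q : MOp k d) (hQ : Q.IsHermitian)
    (T : Finset (Fin k) → MOp k d)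
    (hT : ∀ b ∈ bipartitions k, (T b).IsHermitian)
    (hwit : ∀ b ∈ bipartitions k, ∀ σ ∈ SepAcross d b, 0 ≤ (((Q + T b) * σ).trace).re) :
    (∀ b ∈ bipartitions k,
      Loewner (Q + ∑ b' ∈ bipartitions k, matPosPart (T b')) (Q + T b)) ∧
    (∀ σ ∈ Biseparable k d,
      0 ≤ (((Q + ∑ b' ∈ bipartitions k, matPosPart (T b')) * σ).trace).re) := by
  have hdom : ∀ b ∈ bipartitions k,
      Loewner (Q + ∑ b' ∈ bipartitions k, matPosPart (T b')) (Q + T b) := by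
    intro b hb
    have hsplit : Q + ∑ b' ∈ bipartitions k, matPosPart (T b') - (Q + T b) =
        (matPosPart (T b) - T b) + ∑ b' ∈ (bipartitions k).erase b, matPosPart (T b') := by
      rw [← Finset.add_sum_erase _ _ hb]
      abel
    rw [Loewner, hsplit]
    exact (matPosPart_sub_posSemidef (hT b hb)).add
      (Matrix.posSemidef_sum _ fun b' _ => matPosPart_posSemidef (T b'))
  refine ⟨hdom, fun σ hσ => ?_⟩
  refine convexHull_min ?_ (convex_re_trace_mul_nonneg _) hσ
  refine Set.iUnion₂_subset fun b hb τ hτ => ?_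
  have hexcess := re_trace_mul_nonneg_of_sepAcross (hdom b hb) hτ
  rw [sub_mul, Matrix.trace_sub, Complex.sub_re] at hexcess
  exact (hwit b hb τ hτ).trans (sub_nonneg.mp hexcess)
end

section
/- For every genuinely multipartite entangled state ρ_GME on (ℂ^d)^{⊗k} there exist a Hermitian operator Q and, for each bipartition {b|b̄}, a Hermitian operator T_b such that each W_b := Q + T_b is a weakly optimal entanglement witness for the bipartition {b|b̄}, and Tr(ρ_GME (Q + Σ_b [T_b]_+)) < 0. -/
/-!
The set of biseparable states is compact, because it is the convex hull of a finite union of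
convex hulls of continuous images of products of spheres (`isCompact_convexHull_of_isCompact`,
by Carathéodory's theorem, and `isCompact_sepAcross`). Hence Hahn–Banach strictly separates a GME
state `ρ` from it, and since every functional agrees on Hermitian matrices with
`M ↦ Re Tr(A M)` for some Hermitian `A` (`exists_hermitian_repr`), subtracting a multiple of
the identity produces a Hermitian `Q` with `Tr(Q ρ) < 0` and `Tr(Q σ) > 0` for all biseparable `σ`.

Let `m_b > 0` be the minimum of `Tr(Q σ)` over the compact set of states separable across
`{b|b̄}` and put `T_b = -m_b • 1`. Separable states have unit trace, so `Q + T_b` is nonnegative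
on them and vanishes at the minimizer. As `T_b` is negative, `[T_b]_+ = 0`, and the lifted
operator is `Q` itself, which detects `ρ`.
-/

open scoped ComplexOrder

/-- A weakly optimal entanglement witness for the bipartition `{b|b̄}`:
a Hermitian operator with nonnegative expectation on all states separable across the
bipartition, which vanishes on some such state. -/
def WeaklyOptimalWitness {k : ℕ} (d : ℕ) (b : Finset (Fin k)) (W : MOp k d) : Prop :=
  W.IsHermitian ∧ (∀ σ ∈ SepAcross d b, 0 ≤ ((W * σ).trace).re) ∧
    ∃ σ ∈ SepAcross d b, ((W * σ).trace).re = 0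

/-- In finite dimension the convex hull of a compact set is compact: by Carathéodory it is the
union over `m ≤ dim + 1` of the images of `stdSimplex × s ^ m` under the barycenter map. -/
theorem isCompact_convexHull_of_isCompact {E : Type*} [AddCommGroup E] [Module ℝ E]
    [FiniteDimensional ℝ E] [TopologicalSpace E] [IsTopologicalAddGroup E] [ContinuousSMul ℝ E]
    {s : Set E} (hs : IsCompact s) : IsCompact (convexHull ℝ s) := by
  have key : convexHull ℝ s = ⋃ m ∈ Finset.range (Module.finrank ℝ E + 2),
      (fun p : (Fin m → ℝ) × (Fin m → E) => ∑ i, p.1 i • p.2 i) ''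
        (stdSimplex ℝ (Fin m) ×ˢ Set.univ.pi fun _ => s) := by
    apply Set.Subset.antisymm
    · intro x hx
      obtain ⟨ι, hι, z, w, hz, hai, hw, hw1, hx⟩ := eq_pos_convex_span_of_mem_convexHull hx
      have hcard : Fintype.card ι ≤ Module.finrank ℝ E + 1 :=
        hai.card_le_finrank_succ.trans (by gcongr; exact Submodule.finrank_le _)
      let e := (Fintype.equivFin ι).symm
      simp only [Set.mem_iUnion]
      refine ⟨Fintype.card ι, Finset.mem_range.2 (by omega), (w ∘ e, z ∘ e),
        ⟨⟨fun i => (hw _).le, ?_⟩, fun i _ => hz ⟨_, rfl⟩⟩, ?_⟩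
      · simpa using (Equiv.sum_comp e w).trans hw1
      · simpa using (Equiv.sum_comp e (fun i => w i • z i)).trans hx
    · simp only [Set.iUnion_subset_iff]
      rintro m - _ ⟨⟨w, z⟩, ⟨⟨hw, hw1⟩, hz⟩, rfl⟩
      exact mem_convexHull_of_exists_fintype w z hw hw1 (fun i => hz i trivial) rfl
  rw [key]
  refine Finset.isCompact_biUnion _ fun m _ => ?_
  exact ((isCompact_stdSimplex ℝ (Fin m)).prod (isCompact_univ_pi fun _ => hs)).image
    (by fun_prop)

/-- Compactness of the Euclidean unit sphere of `ℂ^α`; the function type `α → ℂ` itself carries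
the sup norm, so the sphere is written out in coordinates. -/
theorem isCompact_unit_vectors (α : Type*) [Fintype α] :
    IsCompact {φ : α → ℂ | ∑ x, ‖φ x‖ ^ 2 = 1} := by
  refine (isCompact_univ_pi fun _ : α => isCompact_closedBall (0 : ℂ) 1).of_isClosed_subset
    (isClosed_eq (by fun_prop) continuous_const) ?_
  intro φ (hφ : ∑ x, ‖φ x‖ ^ 2 = 1) i _
  have h : ‖φ i‖ ^ 2 ≤ 1 :=
    hφ ▸ Finset.single_le_sum (f := fun x => ‖φ x‖ ^ 2) (fun _ _ => by positivity)
      (Finset.mem_univ i)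
  rw [mem_closedBall_zero_iff]
  exact (sq_le_one_iff₀ (norm_nonneg _)).1 h

theorem isCompact_sepAcross {k : ℕ} (d : ℕ) (b : Finset (Fin k)) :
    IsCompact (SepAcross d b) := by
  apply isCompact_convexHull_of_isCompact
  have h := ((isCompact_unit_vectors (SubIdx d b)).prod
    (isCompact_unit_vectors (CoIdx d b))).image
    (f := fun p : (SubIdx d b → ℂ) × (CoIdx d b → ℂ) => prodPure b p.1 p.2) (by
      refine continuous_matrix fun x y => ?_
      simp only [prodPure]
      fun_prop)
  convert h using 1
  ext M
  constructor
  · rintro ⟨φ, ψ, h1, h2, rfl⟩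
    exact ⟨(φ, ψ), ⟨h1, h2⟩, rfl⟩
  · rintro ⟨⟨φ, ψ⟩, ⟨h1, h2⟩, rfl⟩
    exact ⟨φ, ψ, h1, h2, rfl⟩

theorem sepAcross_nonempty {k d : ℕ} (hd : 2 ≤ d) (b : Finset (Fin k)) :
    (SepAcross d b).Nonempty := by
  classical
  have : NeZero d := ⟨by omega⟩
  refine ⟨_, subset_convexHull ℝ _
    ⟨Pi.single (fun _ => 0) 1, Pi.single (fun _ => 0) 1, ?_, ?_, rfl⟩⟩
  · rw [Finset.sum_eq_single (fun _ => 0)] <;> simp +contextual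
  · rw [Finset.sum_eq_single (fun _ => 0)] <;> simp +contextual

theorem prodPure_trace {k d : ℕ} (b : Finset (Fin k)) (φ : SubIdx d b → ℂ) (ψ : CoIdx d b → ℂ)
    (hφ : ∑ x, ‖φ x‖ ^ 2 = 1) (hψ : ∑ y, ‖ψ y‖ ^ 2 = 1) : (prodPure b φ ψ).trace = 1 := by
  have h1 : (prodPure b φ ψ).trace = ∑ p : SubIdx d b × CoIdx d b,
      ((‖φ p.1‖ ^ 2 * ‖ψ p.2‖ ^ 2 : ℝ) : ℂ) := by
    rw [← Equiv.sum_comp (Equiv.piEquivPiSubtypeProd (fun i => i ∈ b) (fun _ => Fin d))]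
    refine Finset.sum_congr rfl fun x _ => ?_
    change φ (restr b x) * ψ (corestr b x) * star (φ (restr b x)) * star (ψ (corestr b x)) =
      ((‖φ (restr b x)‖ ^ 2 * ‖ψ (corestr b x)‖ ^ 2 : ℝ) : ℂ)
    push_cast
    rw [← Complex.mul_conj', ← Complex.mul_conj']
    simp only [starRingEnd_apply]
    ring
  rw [h1, ← Complex.ofReal_sum, Fintype.sum_prod_type]
  simp only [← Finset.sum_mul_sum, hφ, hψ, mul_one, Complex.ofReal_one]

theorem sepAcross_hermitian_trace {k d : ℕ} (b : Finset (Fin k)) {σ : MOp k d}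
    (hσ : σ ∈ SepAcross d b) : σ.IsHermitian ∧ σ.trace = 1 := by
  have hconv : Convex ℝ {M : MOp k d | M.IsHermitian ∧ M.trace = 1} := by
    intro A hA B hB s t _ _ hst
    refine ⟨?_, ?_⟩
    · refine Matrix.IsHermitian.add ?_ ?_
      · simp [Matrix.IsHermitian, Matrix.conjTranspose_smul, hA.1.eq]
      · simp [Matrix.IsHermitian, Matrix.conjTranspose_smul, hB.1.eq]
    · rw [Matrix.trace_add, Matrix.trace_smul, Matrix.trace_smul, hA.2, hB.2, ← add_smul, hst,
        one_smul]
  refine convexHull_min ?_ hconv hσ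
  rintro _ ⟨φ, ψ, hφ, hψ, rfl⟩
  refine ⟨?_, prodPure_trace b φ ψ hφ hψ⟩
  ext x y
  simp only [Matrix.conjTranspose_apply, prodPure, star_mul', star_star]
  ring

/-- Every real functional on matrices is represented on the Hermitian ones by `M ↦ Re Tr(A M)`
with `A` Hermitian. -/
theorem exists_hermitian_repr {n : Type*} [Fintype n] [DecidableEq n]
    (f : Matrix n n ℂ →ₗ[ℝ] ℝ) :
    ∃ A : Matrix n n ℂ, A.IsHermitian ∧
      ∀ M : Matrix n n ℂ, M.IsHermitian → ((A * M).trace).re = f M := by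
  -- `g` is the complex-linear functional with real part `f`, and `B` represents `g`;
  -- the Hermitian part of `B` has the same expectation on Hermitian matrices.
  let g : Module.Dual ℂ (Matrix n n ℂ) := Module.Dual.extendRCLike f
  have hg : ∀ M, (g M).re = f M := fun M => Module.Dual.re_extendRCLike_apply (𝕜 := ℂ) f M
  let B : Matrix n n ℂ := fun y x => g (Matrix.single x y 1)
  have hB : ∀ M, (B * M).trace = g M := by
    intro M
    conv_rhs => rw [Matrix.matrix_eq_sum_single M]
    rw [map_sum, Matrix.trace, Finset.sum_congr rfl (fun i _ => Matrix.diag_apply _ i)]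
    simp only [Matrix.mul_apply, map_sum]
    rw [Finset.sum_comm]
    refine Finset.sum_congr rfl fun i _ => Finset.sum_congr rfl fun j _ => ?_
    have : Matrix.single i j (M i j) = M i j • Matrix.single i j (1 : ℂ) := by simp
    rw [this, map_smul, smul_eq_mul, mul_comm]
  refine ⟨(1 / 2 : ℂ) • (B + B.conjTranspose), ?_, fun M hM => ?_⟩
  · rw [Matrix.IsHermitian, Matrix.conjTranspose_smul, Matrix.conjTranspose_add,
      Matrix.conjTranspose_conjTranspose, add_comm]
    simp
  · have h2 : (B.conjTranspose * M).trace = star (B * M).trace := by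
      rw [← Matrix.trace_conjTranspose, Matrix.conjTranspose_mul, hM.eq, Matrix.trace_mul_comm]
    have h3 : ((1 / 2 : ℂ) • (B + B.conjTranspose) * M).trace =
        ((1 / 2 : ℝ) : ℂ) * ((B * M).trace + star (B * M).trace) := by
      rw [Matrix.smul_mul, Matrix.trace_smul, Matrix.add_mul, Matrix.trace_add, h2]
      simp
    rw [h3, Complex.re_ofReal_mul, Complex.add_re, hB, ← hg]
    simp only [Complex.star_def, Complex.conj_re]
    ring

theorem matPosPart_neg_smul_one {n : Type*} [Fintype n] [DecidableEq n] {m : ℝ} (hm : 0 ≤ m) :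
    matPosPart (-(m : ℂ) • (1 : Matrix n n ℂ)) = 0 := by
  unfold matPosPart
  split_ifs with hA
  · have h : ∀ i, max (hA.eigenvalues i) 0 = 0 := by
      intro i
      apply max_eq_right
      rw [hA.eigenvalues_eq, Matrix.smul_mulVec, Matrix.one_mulVec, dotProduct_smul, smul_eq_mul]
      have h0 := (Complex.le_def.1
        (dotProduct_star_self_nonneg (hA.eigenvectorBasis i).ofLp)).1
      have hre : ∀ z : ℂ, 0 ≤ z.re → (-(m : ℂ) * z).re ≤ 0 := fun z hz => by
        simpa using mul_nonneg hm hz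
      exact hre _ h0
    simp only [h, Complex.ofReal_zero, Matrix.diagonal_zero, mul_zero, zero_mul]
  · rfl

/-- For every genuinely multipartite entangled state `ρ` there are a
Hermitian `Q` and Hermitian `T_b` such that every `W_b = Q + T_b` is a weakly optimal
witness for the bipartition `{b|b̄}`, and `Tr(ρ (Q + ∑_b [T_b]_+)) < 0`. -/
theorem GME_state_detected_by_lifted_witness
    (k d : ℕ) (hk : 2 ≤ k) (hd : 2 ≤ d)
    (ρ : MOp k d) (hρ : IsState ρ) (hGME : ρ ∉ Biseparable k d) :
    ∃ (Q : MOp k d) (T : Finset (Fin k) → MOp k d),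
      Q.IsHermitian ∧
      (∀ b ∈ bipartitions k, (T b).IsHermitian) ∧
      (∀ b ∈ bipartitions k, WeaklyOptimalWitness d b (Q + T b)) ∧
      ((ρ * (Q + ∑ b ∈ bipartitions k, matPosPart (T b))).trace).re < 0 := by
  have : LocallyConvexSpace ℝ (MOp k d) :=
    inferInstanceAs (LocallyConvexSpace ℝ (MIdx k d → MIdx k d → ℂ))
  have hcomp : IsCompact (Biseparable k d) :=
    isCompact_convexHull_of_isCompact
      ((bipartitions k).isCompact_biUnion fun b _ => isCompact_sepAcross d b)
  obtain ⟨f, u, hfρ, hfσ⟩ :=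
    geometric_hahn_banach_point_closed (convex_convexHull ℝ _) hcomp.isClosed hGME
  obtain ⟨A, hA, hAf⟩ := exists_hermitian_repr f.toLinearMap
  have hscalar : ∀ r : ℝ, (-(r : ℂ) • (1 : MOp k d)).IsHermitian := fun r => by
    simp [Matrix.IsHermitian, Matrix.conjTranspose_smul]
  -- Subtracting `r • 1` lowers the expectation in a unit-trace matrix by `r`.
  have hshift : ∀ (X M : MOp k d) (r : ℝ), M.trace = 1 →
      (((X + -(r : ℂ) • 1) * M).trace).re = ((X * M).trace).re - r := by
    intro X M r hM
    rw [Matrix.add_mul, Matrix.trace_add, Matrix.smul_mul, Matrix.one_mul, Matrix.trace_smul, hM]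
    simp [sub_eq_add_neg]
  set Q : MOp k d := A + -(u : ℂ) • 1 with hQ
  have hQH : Q.IsHermitian := hA.add (hscalar u)
  have hmin : ∀ b, ∃ σ ∈ SepAcross d b, ∀ τ ∈ SepAcross d b,
      ((Q * σ).trace).re ≤ ((Q * τ).trace).re := fun b =>
    (isCompact_sepAcross d b).exists_isMinOn (sepAcross_nonempty hd b)
      (Continuous.continuousOn (f := fun σ : MOp k d => ((Q * σ).trace).re)
        (Complex.continuous_re.comp (continuous_const.mul continuous_id).matrix_trace))
  choose σ hσ hσmin using hmin
  refine ⟨Q, fun b => -((((Q * σ b).trace).re : ℝ) : ℂ) • 1, hQH, fun b _ => hscalar _,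
    fun b _ => ⟨hQH.add (hscalar _), fun τ hτ => ?_, σ b, hσ b, ?_⟩, ?_⟩
  · rw [hshift _ _ _ (sepAcross_hermitian_trace b hτ).2]
    exact sub_nonneg.2 (hσmin b τ hτ)
  · rw [hshift _ _ _ (sepAcross_hermitian_trace b (hσ b)).2, sub_self]
  · rw [Finset.sum_eq_zero, add_zero, Matrix.trace_mul_comm, hQ, hshift _ _ _ hρ.2,
      hAf ρ hρ.1.isHermitian]
    · exact sub_neg.2 hfρ
    · intro b hb
      apply matPosPart_neg_smul_one
      obtain ⟨hH, htr⟩ := sepAcross_hermitian_trace b (hσ b)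
      rw [hQ, hshift _ _ _ htr, hAf _ hH]
      exact sub_nonneg.2
        (hfσ _ (subset_convexHull ℝ _ (Set.mem_biUnion hb (hσ b)))).le
end

section
/- Let {G_k^A}_{k} and {G_k^B}_{k} be families of Hermitian operators on ℂ^m and ℂ^n respectively, each orthonormal with respect to the Hilbert–Schmidt inner product (Tr(G_i^A G_j^A) = Tr(G_i^B G_j^B) = δ_{ij}). Then the operator W = 1 − Σ_k G_k^A ⊗ G_k^B satisfies Tr(Wρ) ≥ 0 for every separable state ρ on ℂ^m ⊗ ℂ^n; equivalently, Tr(ρ Σ_k G_k^A ⊗ G_k^B) ≤ 1 for every separable ρ. -/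
open scoped Kronecker

noncomputable section

/-- The pure product state `|x⟩⟨x| ⊗ |y⟩⟨y|` on `ℂ^m ⊗ ℂ^n`. -/
def prodPureBip {m n : ℕ} (x : Fin m → ℂ) (y : Fin n → ℂ) :
    Matrix (Fin m × Fin n) (Fin m × Fin n) ℂ :=
  (Matrix.vecMulVec x (star x)) ⊗ₖ (Matrix.vecMulVec y (star y))

/-- Separable states on `ℂ^m ⊗ ℂ^n`: convex combinations of pure product states. -/
def SepBip (m n : ℕ) : Set (Matrix (Fin m × Fin n) (Fin m × Fin n) ℂ) :=
  convexHull ℝ {ρ | ∃ (x : Fin m → ℂ) (y : Fin n → ℂ),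
    (∑ i, ‖x i‖ ^ 2 = 1) ∧ (∑ j, ‖y j‖ ^ 2 = 1) ∧ ρ = prodPureBip x y}

/-!
The conditions on `ρ` are real-affine, so it suffices to check them on pure product states
`X ⊗ Y` with `X = |x⟩⟨x|`, `Y = |y⟩⟨y|`. There `Tr((∑ G_k ⊗ H_k)(X ⊗ Y)) = ∑ g_k h_k` with the
real numbers `g_k = Tr(G_k X)` and `h_k = Tr(H_k Y)`. Bessel's inequality for the Hilbert–Schmidt
inner product (`hs_bessel`) gives `∑ g_k² ≤ Tr X² = 1` and `∑ h_k² ≤ Tr Y² = 1`, and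
`g_k h_k ≤ (g_k² + h_k²) / 2` concludes.
-/

open scoped ComplexOrder in
lemma trace_mul_self_re_nonneg {d : ℕ} {A : Matrix (Fin d) (Fin d) ℂ} (hA : A.IsHermitian) :
    0 ≤ (A * A).trace.re := by
  have h := (Matrix.posSemidef_conjTranspose_mul_self A).trace_nonneg
  rw [hA.eq] at h
  exact (Complex.le_def.mp h).1

lemma trace_mul_im_eq_zero {d : ℕ} {A B : Matrix (Fin d) (Fin d) ℂ}
    (hA : A.IsHermitian) (hB : B.IsHermitian) : (A * B).trace.im = 0 := by
  have h : star (A * B).trace = (A * B).trace := by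
    rw [← Matrix.trace_conjTranspose, Matrix.conjTranspose_mul, hA.eq, hB.eq,
      Matrix.trace_mul_comm]
  exact Complex.conj_eq_iff_im.mp h

/-- Bessel's inequality for the Hilbert–Schmidt inner product, obtained from
`Tr (X - S)² ≥ 0` with `S` the projection of `X` onto the span of the family. -/
lemma hs_bessel {d K : ℕ} {G : Fin K → Matrix (Fin d) (Fin d) ℂ}
    (hG : ∀ i, (G i).IsHermitian)
    (hon : ∀ i j, ((G i * G j).trace) = if i = j then 1 else 0)
    {X : Matrix (Fin d) (Fin d) ℂ} (hX : X.IsHermitian) :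
    ∑ k, (G k * X).trace.re ^ 2 ≤ (X * X).trace.re := by
  set g : Fin K → ℝ := fun k => (G k * X).trace.re with hg
  set S : Matrix (Fin d) (Fin d) ℂ := ∑ k, g k • G k with hS
  have hSh : S.IsHermitian := by
    simp [hS, Matrix.IsHermitian, Matrix.conjTranspose_sum, Matrix.conjTranspose_smul,
      fun i => (hG i).eq]
  have h0 := trace_mul_self_re_nonneg (hX.sub hSh)
  have hSX : (S * X).trace.re = ∑ k, g k ^ 2 := by
    simp [hS, Finset.sum_mul, Matrix.trace_sum, hg, sq]
  have hSS : (S * S).trace.re = ∑ k, g k ^ 2 := by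
    simp [hS, Finset.sum_mul, Finset.mul_sum, Matrix.trace_sum, hon, sq]
  have hexp : ((X - S) * (X - S)).trace.re
      = (X * X).trace.re - 2 * (S * X).trace.re + (S * S).trace.re := by
    simp only [sub_mul, mul_sub, Matrix.trace_sub, Complex.sub_re, Matrix.trace_mul_comm X S]
    ring
  change ∑ k, g k ^ 2 ≤ _
  linarith

lemma vecMulVec_star_isHermitian {d : ℕ} (x : Fin d → ℂ) :
    (Matrix.vecMulVec x (star x)).IsHermitian := by
  simp [Matrix.IsHermitian, Matrix.conjTranspose_vecMulVec]

lemma trace_vecMulVec_star {d : ℕ} {x : Fin d → ℂ} (hx : ∑ i, ‖x i‖ ^ 2 = 1) :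
    (Matrix.vecMulVec x (star x)).trace = 1 := by
  rw [Matrix.trace_vecMulVec]
  have : ((∑ i, ‖x i‖ ^ 2 : ℝ) : ℂ) = 1 := by rw [hx]; simp
  rw [← this]
  simp [dotProduct, Complex.mul_conj, Complex.normSq_eq_norm_sq]

lemma trace_vecMulVec_star_sq {d : ℕ} {x : Fin d → ℂ} (hx : ∑ i, ‖x i‖ ^ 2 = 1) :
    (Matrix.vecMulVec x (star x) * Matrix.vecMulVec x (star x)).trace = 1 := by
  have h := trace_vecMulVec_star hx
  have h1 : star x ⬝ᵥ x = 1 := by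
    rwa [Matrix.trace_vecMulVec, dotProduct_comm] at h
  rw [Matrix.vecMulVec_mul_vecMulVec, h1]
  simpa using h

/-- **CCNR witness.** If `{G_k}` and `{H_k}` are families of Hermitian
operators on `ℂ^m`, `ℂ^n` respectively, each orthonormal with respect to the
Hilbert–Schmidt inner product, then `W = 1 - ∑_k G_k ⊗ H_k` has nonnegative expectation
value on every separable state; equivalently `Tr(ρ ∑_k G_k ⊗ H_k) ≤ 1` for separable `ρ`. -/
theorem ccnr_witness (m n K : ℕ)
    (G : Fin K → Matrix (Fin m) (Fin m) ℂ) (H : Fin K → Matrix (Fin n) (Fin n) ℂ)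
    (hGherm : ∀ i, (G i).IsHermitian) (hHherm : ∀ i, (H i).IsHermitian)
    (hGon : ∀ i j, ((G i * G j).trace) = if i = j then 1 else 0)
    (hHon : ∀ i j, ((H i * H j).trace) = if i = j then 1 else 0) :
    ∀ ρ ∈ SepBip m n,
      0 ≤ ((((1 : Matrix (Fin m × Fin n) (Fin m × Fin n) ℂ) - ∑ i, G i ⊗ₖ H i) * ρ).trace).re ∧
      ((ρ * ∑ i, G i ⊗ₖ H i).trace).re ≤ 1 := by
  have hconv : Convex ℝ {ρ : Matrix (Fin m × Fin n) (Fin m × Fin n) ℂ |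
      0 ≤ (((1 - ∑ i, G i ⊗ₖ H i) * ρ).trace).re ∧
      ((ρ * ∑ i, G i ⊗ₖ H i).trace).re ≤ 1} := by
    refine (convex_halfSpace_ge (f := fun ρ : Matrix (Fin m × Fin n) (Fin m × Fin n) ℂ =>
        (((1 - ∑ i, G i ⊗ₖ H i) * ρ).trace).re) ⟨?_, ?_⟩ 0).inter
      (convex_halfSpace_le (f := fun ρ : Matrix (Fin m × Fin n) (Fin m × Fin n) ℂ =>
        ((ρ * ∑ i, G i ⊗ₖ H i).trace).re) ⟨?_, ?_⟩ 1)
    · intro a b; simp only [mul_add, Matrix.trace_add, Complex.add_re]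
    · intro c a; simp only [Matrix.mul_smul, Matrix.trace_smul, Complex.smul_re]
    · intro a b; simp only [add_mul, Matrix.trace_add, Complex.add_re]
    · intro c a; simp only [Matrix.smul_mul, Matrix.trace_smul, Complex.smul_re]
  refine convexHull_min ?_ hconv
  rintro _ ⟨x, y, hx, hy, rfl⟩
  have hX := vecMulVec_star_isHermitian x
  have hY := vecMulVec_star_isHermitian y
  have hbX := hs_bessel hGherm hGon hX
  have hbY := hs_bessel hHherm hHon hY
  have htr : (prodPureBip x y).trace = 1 := by
    rw [prodPureBip, Matrix.trace_kronecker, trace_vecMulVec_star hx, trace_vecMulVec_star hy,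
      one_mul]
  rw [trace_vecMulVec_star_sq hx, Complex.one_re] at hbX
  rw [trace_vecMulVec_star_sq hy, Complex.one_re] at hbY
  have key : (((∑ i, G i ⊗ₖ H i) * prodPureBip x y).trace).re ≤ 1 := by
    have hsum : (((∑ i, G i ⊗ₖ H i) * prodPureBip x y).trace).re
        = ∑ i, (G i * Matrix.vecMulVec x (star x)).trace.re
            * (H i * Matrix.vecMulVec y (star y)).trace.re := by
      rw [Finset.sum_mul, Matrix.trace_sum, Complex.re_sum]
      refine Finset.sum_congr rfl fun i _ => ?_
      rw [prodPureBip, ← Matrix.mul_kronecker_mul, Matrix.trace_kronecker, Complex.mul_re,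
        trace_mul_im_eq_zero (hGherm i) hX, zero_mul, sub_zero]
    rw [hsum]
    have hle := Finset.sum_le_sum fun i (_ : i ∈ Finset.univ) =>
      two_mul_le_add_sq (G i * Matrix.vecMulVec x (star x)).trace.re
        (H i * Matrix.vecMulVec y (star y)).trace.re
    simp only [mul_assoc, ← Finset.mul_sum, Finset.sum_add_distrib] at hle
    linarith
  refine ⟨?_, ?_⟩
  · rw [sub_mul, one_mul, Matrix.trace_sub, htr, Complex.sub_re, Complex.one_re]
    linarith
  · rwa [Matrix.trace_mul_comm]

end
end

section
/- Let W be a Hermitian operator on (ℂ^d)^{⊗k} such that for every bipartition {b|b̄} there exist a positive semidefinite operator P_b and families {G_k^b}, {G_k^{b̄}} of Hermitian operators on the subsystems in b and b̄ respectively, each orthonormal with respect to the Hilbert–Schmidt inner product, with W = P_b + 1 − Σ_k G_k^b ⊗ G_k^{b̄}. Then Tr(Wσ) ≥ 0 for every biseparable state σ, i.e., W is a witness for genuine multipartite entanglement. -/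
/-!
The map `σ ↦ Re Tr(Wσ)` is real-linear, so nonnegativity passes through both convex hulls and only
pure product states `|φ⟩⟨φ| ⊗ |ψ⟩⟨ψ|` across a fixed bipartition `{b|b̄}` have to be treated
(`convex_trace_nonneg`). There `W = P + 1 - ∑ G_i ⊗ H_i`; the term `P` contributes a nonnegative
amount and `1` contributes `1`. The remaining term is `∑ ⟨φ|G_i|φ⟩⟨ψ|H_i|ψ⟩`, which is at most `1`
(`ccnr_prodPure`): by Bessel's inequality in Hilbert–Schmidt space (`sum_sq_expectation_le_one`)
each of the two sequences of expectation values has square sum at most `1`.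
-/


open scoped ComplexOrder

/-- The operator `A ⊗ B` across the bipartition `{b|b̄}`. -/
def prodOp {k d : ℕ} (b : Finset (Fin k))
    (A : Matrix (SubIdx d b) (SubIdx d b) ℂ) (B : Matrix (CoIdx d b) (CoIdx d b) ℂ) :
    MOp k d := fun x y =>
  A (restr b x) (restr b y) * B (corestr b x) (corestr b y)

/-- Bessel's inequality for a Hilbert–Schmidt orthonormal family of Hermitian operators against
the rank-one projection onto a unit vector `φ`: since `Tr(|φ⟩⟨φ|²) = 1`, the expectation values
`⟨φ|G_i|φ⟩` have square sum at most one. -/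
lemma sum_sq_expectation_le_one {n : Type*} [Fintype n] {K : ℕ}
    (G : Fin K → Matrix n n ℂ) (hG : ∀ i, (G i).IsHermitian)
    (hGo : ∀ i j, (G i * G j).trace = if i = j then 1 else 0)
    (φ : n → ℂ) (hφ : ∑ x, ‖φ x‖ ^ 2 = 1) :
    ∑ i, ‖∑ x, ∑ y, G i x y * φ y * star (φ x)‖ ^ 2 ≤ 1 := by
  classical
  let v : Fin K → EuclideanSpace ℂ (n × n) := fun i => WithLp.toLp 2 fun p => G i p.1 p.2
  let r : EuclideanSpace ℂ (n × n) := WithLp.toLp 2 fun p => φ p.1 * star (φ p.2)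
  have hv : Orthonormal ℂ v := by
    rw [orthonormal_iff_ite]
    intro i j
    rw [← hGo i j, PiLp.inner_apply, Fintype.sum_prod_type, Finset.sum_comm]
    simp only [Matrix.trace, Matrix.diag, Matrix.mul_apply]
    refine Finset.sum_congr rfl fun x _ => Finset.sum_congr rfl fun y _ => ?_
    rw [← (hG i).apply x y]
    simp [v, mul_comm]
  have hr : ‖r‖ ^ 2 = 1 := by
    rw [EuclideanSpace.norm_sq_eq, Fintype.sum_prod_type]
    simp only [r, norm_mul, norm_star, mul_pow, ← Finset.mul_sum, hφ, mul_one]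
  have hB := hv.sum_inner_products_le r (s := Finset.univ)
  rw [hr] at hB
  refine le_trans (le_of_eq (Finset.sum_congr rfl fun i _ => ?_)) hB
  congr 2
  rw [PiLp.inner_apply, Fintype.sum_prod_type, Finset.sum_comm]
  refine Finset.sum_congr rfl fun x _ => Finset.sum_congr rfl fun y _ => ?_
  rw [← (hG i).apply y x]
  simp [v, r]
  ring

/-- Sums over the global index factor through the splitting of `x` into its `b` and `b̄` parts. -/
lemma sum_split {k d : ℕ} (b : Finset (Fin k)) (f : SubIdx d b → CoIdx d b → ℂ) :
    ∑ x : MIdx k d, f (restr b x) (corestr b x) = ∑ p, ∑ q, f p q := by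
  rw [← Fintype.sum_prod_type' f]
  exact Fintype.sum_equiv (Equiv.piEquivPiSubtypeProd (fun i => i ∈ b) (fun _ => Fin d)) _ _
    fun x => rfl

lemma trace_prodOp_mul_prodPure {k d : ℕ} (b : Finset (Fin k))
    (A : Matrix (SubIdx d b) (SubIdx d b) ℂ) (B : Matrix (CoIdx d b) (CoIdx d b) ℂ)
    (φ : SubIdx d b → ℂ) (ψ : CoIdx d b → ℂ) :
    (prodOp b A B * prodPure b φ ψ).trace =
      (∑ x, ∑ y, A x y * φ y * star (φ x)) * (∑ x, ∑ y, B x y * ψ y * star (ψ x)) := by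
  simp only [Matrix.trace, Matrix.diag, Matrix.mul_apply, prodOp, prodPure]
  have h1 : ∀ x : MIdx k d, _ = _ := fun x => sum_split b fun p q =>
    A (restr b x) p * B (corestr b x) q *
      (φ p * ψ q * star (φ (restr b x)) * star (ψ (corestr b x)))
  simp only [h1]
  rw [sum_split b fun p' q' => ∑ p, ∑ q, A p' p * B q' q * (φ p * ψ q * star (φ p') * star (ψ q'))]
  simp only [Finset.sum_mul_sum]
  refine Finset.sum_congr rfl fun p' _ => Finset.sum_congr rfl fun q' _ =>
    Finset.sum_congr rfl fun p _ => Finset.sum_congr rfl fun q _ => ?_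
  ring

lemma trace_prodPure {k d : ℕ} (b : Finset (Fin k))
    (φ : SubIdx d b → ℂ) (ψ : CoIdx d b → ℂ)
    (hφ : ∑ x, ‖φ x‖ ^ 2 = 1) (hψ : ∑ x, ‖ψ x‖ ^ 2 = 1) :
    (prodPure b φ ψ).trace = 1 := by
  have key : ∀ {n : Type} [Fintype n] (χ : n → ℂ), ∑ x, ‖χ x‖ ^ 2 = 1 →
      ∑ x, χ x * star (χ x) = 1 := by
    intro n _ χ h
    have : ∀ x, χ x * star (χ x) = ((‖χ x‖ ^ 2 : ℝ) : ℂ) := fun x => by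
      simpa using Complex.mul_conj' (χ x)
    simp only [this]
    rw [← Complex.ofReal_sum, h, Complex.ofReal_one]
  simp only [Matrix.trace, Matrix.diag, prodPure]
  rw [sum_split b fun p q => φ p * ψ q * star (φ p) * star (ψ q)]
  calc _ = (∑ p, φ p * star (φ p)) * ∑ q, ψ q * star (ψ q) := by
        rw [Finset.sum_mul_sum]
        exact Finset.sum_congr rfl fun p _ => Finset.sum_congr rfl fun q _ => by ring
    _ = 1 := by rw [key φ hφ, key ψ hψ, mul_one]

lemma trace_posSemidef_mul_prodPure_nonneg {k d : ℕ} (b : Finset (Fin k)) (P : MOp k d)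
    (hP : P.PosSemidef) (φ : SubIdx d b → ℂ) (ψ : CoIdx d b → ℂ) :
    0 ≤ ((P * prodPure b φ ψ).trace).re := by
  have h := hP.dotProduct_mulVec_nonneg (fun x => φ (restr b x) * ψ (corestr b x))
  have e : (P * prodPure b φ ψ).trace =
      star (fun x => φ (restr b x) * ψ (corestr b x)) ⬝ᵥ
        (P.mulVec fun x => φ (restr b x) * ψ (corestr b x)) := by
    simp only [Matrix.trace, Matrix.diag, Matrix.mul_apply, prodPure, dotProduct, Matrix.mulVec,
      Finset.mul_sum, Pi.star_apply, star_mul']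
    exact Finset.sum_congr rfl fun x _ => Finset.sum_congr rfl fun y _ => by ring
  rw [e]
  exact (Complex.nonneg_iff.mp h).1

/-- The CCNR criterion on pure product states: by Bessel on each side and `2st ≤ s² + t²`. -/
lemma ccnr_prodPure {k d K : ℕ} (b : Finset (Fin k))
    (G : Fin K → Matrix (SubIdx d b) (SubIdx d b) ℂ)
    (H : Fin K → Matrix (CoIdx d b) (CoIdx d b) ℂ)
    (hG : ∀ i, (G i).IsHermitian) (hH : ∀ i, (H i).IsHermitian)
    (hGo : ∀ i j, (G i * G j).trace = if i = j then 1 else 0)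
    (hHo : ∀ i j, (H i * H j).trace = if i = j then 1 else 0)
    (φ : SubIdx d b → ℂ) (ψ : CoIdx d b → ℂ)
    (hφ : ∑ x, ‖φ x‖ ^ 2 = 1) (hψ : ∑ x, ‖ψ x‖ ^ 2 = 1) :
    (((∑ i, prodOp b (G i) (H i)) * prodPure b φ ψ).trace).re ≤ 1 := by
  have h1 := sum_sq_expectation_le_one G hG hGo φ hφ
  have h2 := sum_sq_expectation_le_one H hH hHo ψ hψ
  rw [Matrix.sum_mul, Matrix.trace_sum, Complex.re_sum]
  have h3 : ∀ i, ((prodOp b (G i) (H i) * prodPure b φ ψ).trace).re ≤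
      (‖∑ x, ∑ y, G i x y * φ y * star (φ x)‖ ^ 2 +
        ‖∑ x, ∑ y, H i x y * ψ y * star (ψ x)‖ ^ 2) / 2 := by
    intro i
    rw [trace_prodOp_mul_prodPure]
    refine (Complex.re_le_norm _).trans ?_
    rw [norm_mul]
    linarith [two_mul_le_add_sq ‖∑ x, ∑ y, G i x y * φ y * star (φ x)‖
      ‖∑ x, ∑ y, H i x y * ψ y * star (ψ x)‖]
  refine (Finset.sum_le_sum fun i _ => h3 i).trans ?_
  rw [← Finset.sum_div, Finset.sum_add_distrib]
  linarith

lemma convex_trace_nonneg {k d : ℕ} (W : MOp k d) :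
    Convex ℝ {σ : MOp k d | 0 ≤ ((W * σ).trace).re} := by
  intro x hx y hy s t hs ht _
  simp only [Set.mem_ofPred_eq] at *
  rw [Matrix.mul_add, Matrix.mul_smul, Matrix.mul_smul, Matrix.trace_add, Matrix.trace_smul,
    Matrix.trace_smul, Complex.add_re, Complex.smul_re, Complex.smul_re]
  exact add_nonneg (mul_nonneg hs hx) (mul_nonneg ht hy)

/-- If a Hermitian operator `W` can be written, for every bipartition
`{b|b̄}`, as `W = P_b + 1 - ∑_k G_k^b ⊗ G_k^b̄` with `P_b ≥ 0` and Hilbert–Schmidt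
orthonormal families of Hermitian operators `{G_k^b}`, `{G_k^b̄}`, then `W` is
nonnegative on every biseparable state, i.e. it is a witness for genuine multipartite
entanglement. -/
theorem ccnr_lifted_GME_witness
    (k d : ℕ) (hk : 2 ≤ k) (hd : 2 ≤ d)
    (W : MOp k d) (hW : W.IsHermitian)
    (hstruct : ∀ b ∈ bipartitions k,
      ∃ (K : ℕ) (G : Fin K → Matrix (SubIdx d b) (SubIdx d b) ℂ)
        (H : Fin K → Matrix (CoIdx d b) (CoIdx d b) ℂ) (P : MOp k d),
        P.PosSemidef ∧
        (∀ i, (G i).IsHermitian) ∧ (∀ i, (H i).IsHermitian) ∧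
        (∀ i j, (G i * G j).trace = if i = j then 1 else 0) ∧
        (∀ i j, (H i * H j).trace = if i = j then 1 else 0) ∧
        W = P + 1 - ∑ i, prodOp b (G i) (H i)) :
    ∀ σ ∈ Biseparable k d, 0 ≤ ((W * σ).trace).re := by
  suffices h : Biseparable k d ⊆ {σ | 0 ≤ ((W * σ).trace).re} from fun σ hσ => h hσ
  refine convexHull_min ?_ (convex_trace_nonneg W)
  refine Set.iUnion₂_subset fun b hb => convexHull_min ?_ (convex_trace_nonneg W)
  rintro _ ⟨φ, ψ, hφ, hψ, rfl⟩
  obtain ⟨K, G, H, P, hP, hG, hH, hGo, hHo, rfl⟩ := hstruct b hb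
  have h1 := trace_posSemidef_mul_prodPure_nonneg b P hP φ ψ
  have h2 := ccnr_prodPure b G H hG hH hGo hHo φ ψ hφ hψ
  rw [Set.mem_ofPred_eq, Matrix.sub_mul, Matrix.add_mul, Matrix.one_mul, Matrix.trace_sub,
    Matrix.trace_add, Complex.sub_re, Complex.add_re, trace_prodPure b φ ψ hφ hψ, Complex.one_re]
  linarith
end

section
/- The mean width of the set D of all density matrices on ℂ^n satisfies lim_{n→∞} √n · w(D) = 2, i.e., w(D) ∼ 2/√n as n → ∞. -/
/-!
For a standard Gaussian vector `x` in `ℝ^N`, `N = n² - 1`, the matrix `f x` is a traceless GUE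
matrix. The support function `h` of the set of density matrices is positively homogeneous, so polar
coordinates (`gauss_polar`) give `E h(x) = w(D) · E ‖x‖`. Since `E ‖x‖ / n → 1`
(`norm_mean_tendsto`), the claim amounts to `E h(x) / √n → 2`, where `h(x)` is the largest
eigenvalue of `f x`.

Write `Y = f x / √n` and `tr = n⁻¹ Tr`. Gaussian integration by parts together with the completeness
relation of an orthonormal basis of traceless Hermitian matrices yields the Schwinger–Dyson
equation (`schwinger_dyson`), a recursion for the mixed moments `E ∏ tr Y^{aᵢ}` whose leading part
is the Catalan recursion and whose corrections carry a factor `n⁻²`. It is used twice.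

*Lower bound.* For fixed exponents the mixed moments converge to products of semicircle moments
(`mom_tendsto`), hence each `tr Y^a` concentrates (`variance_tendsto`). Testing the support function
against the state proportional to `Y^{2k} (2 + Y)²` bounds `h(x) / √n` from below by a ratio which
concentrates at `4 C_{k+1} / (4 C_k + C_{k+1})`, with `C_k` the Catalan numbers, and this tends to
`2` as `k → ∞` (`catalan_ratio`, `supp_mean_lower`).

*Upper bound.* For `δ > 0` let `τ` be the moments of the semicircle law translated by `δ`, which
solve the Catalan recursion with an additional term `δ τ a`. For exponents of order `log n` the
extra term dominates the `n⁻²` corrections, so by induction the mixed moments are at most products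
of the `τ a ≤ (2 + δ)^{a+1}` (`mom_bound`, `even_mom_bound`). As `(h(x) / √n)^{2K} ≤ n tr Y^{2K}`,
taking `2K` to be a large multiple of `log n` gives the upper bound (`supp_upper`,
`supp_mean_upper`).
-/

open MeasureTheory Metric
open scoped ComplexOrder RealInnerProductSpace

noncomputable section

/-- The uniform probability measure on the unit Euclidean sphere of `ℝ^N`. -/
def sphereUniform (N : ℕ) : Measure (sphere (0 : EuclideanSpace ℝ (Fin N)) 1) :=
  (((volume : Measure (EuclideanSpace ℝ (Fin N))).toSphere Set.univ)⁻¹) •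
    (volume : Measure (EuclideanSpace ℝ (Fin N))).toSphere

/-- `f` identifies `ℝ^N` isometrically with the subspace of traceless Hermitian matrices,
equipped with the Hilbert–Schmidt inner product `⟨A, B⟩ = Tr(AB)`. -/
structure IsHermParam {ι : Type*} [Fintype ι] {N : ℕ}
    (f : EuclideanSpace ℝ (Fin N) →ₗ[ℝ] Matrix ι ι ℂ) : Prop where
  herm : ∀ x, (f x).IsHermitian
  traceless : ∀ x, (f x).trace = 0
  inner_eq : ∀ x y, ((f x * f y).trace).re = ⟪x, y⟫
  surj : ∀ A : Matrix ι ι ℂ, A.IsHermitian → A.trace = 0 → ∃ x, f x = A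

/-- The mean width of a set of matrices, computed in the traceless Hermitian subspace
via an isometric parametrization `f`:
`w(K) = ∫_S max_{M ∈ K} Tr(X M) dσ(X)`, with `σ` the uniform probability measure on the
Hilbert–Schmidt unit sphere of traceless Hermitian matrices. -/
def matMeanWidth {ι : Type*} [Fintype ι] {N : ℕ}
    (f : EuclideanSpace ℝ (Fin N) →ₗ[ℝ] Matrix ι ι ℂ) (K : Set (Matrix ι ι ℂ)) : ℝ :=
  ∫ u, sSup ((fun M => ((f u * M).trace).re) '' K) ∂(sphereUniform N)

/-- The maximally mixed state `𝟙/n`. -/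
def maxMixed (ι : Type*) [Fintype ι] [DecidableEq ι] : Matrix ι ι ℂ :=
  ((Fintype.card ι : ℂ))⁻¹ • 1

/-- The volume radius of a set `K` of trace-one matrices, computed in the hyperplane of
trace-one Hermitian matrices (centered at the maximally mixed state) via an isometric
parametrization `f` of the traceless Hermitian subspace:
`vrad(K) = (vol K / vol B)^(1/N)`. -/
def matVolRad {ι : Type*} [Fintype ι] [DecidableEq ι] {N : ℕ}
    (f : EuclideanSpace ℝ (Fin N) →ₗ[ℝ] Matrix ι ι ℂ) (K : Set (Matrix ι ι ℂ)) : ℝ :=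
  ((volume (f ⁻¹' ((fun A => A - maxMixed ι) '' K))).toReal /
      (volume (ball (0 : EuclideanSpace ℝ (Fin N)) 1)).toReal) ^ ((N : ℝ)⁻¹)

/-- The set of density matrices (states). -/
def densityMatrices (ι : Type*) [Fintype ι] : Set (Matrix ι ι ℂ) :=
  {ρ | ρ.PosSemidef ∧ ρ.trace = 1}

end

/-! ### Polynomial growth, the Gaussian measure and integration by parts -/

noncomputable section

/-- A continuous function of at most polynomial growth. -/
def PolyG {V F : Type*} [NormedAddCommGroup V] [NormedAddCommGroup F] (φ : V → F) : Prop :=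
  Continuous φ ∧ ∃ (C : ℝ) (k : ℕ), ∀ x, ‖φ x‖ ≤ C * (1 + ‖x‖) ^ k

namespace PolyG
variable {V F : Type*} [NormedAddCommGroup V] [NormedAddCommGroup F]

lemma const (c : F) : PolyG (fun _ : V => c) :=
  ⟨continuous_const, ‖c‖, 0, by simp⟩

lemma add {φ ψ : V → F} (h1 : PolyG φ) (h2 : PolyG ψ) : PolyG (fun x => φ x + ψ x) := by
  obtain ⟨c1, C1, k1, h1⟩ := h1
  obtain ⟨c2, C2, k2, h2⟩ := h2
  refine ⟨c1.add c2, |C1| + |C2|, k1 + k2, fun x => ?_⟩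
  have hx : 1 ≤ 1 + ‖x‖ := by linarith [norm_nonneg x]
  have e1 : (1 + ‖x‖) ^ k1 ≤ (1 + ‖x‖) ^ (k1 + k2) := pow_le_pow_right₀ hx (by omega)
  have e2 : (1 + ‖x‖) ^ k2 ≤ (1 + ‖x‖) ^ (k1 + k2) := pow_le_pow_right₀ hx (by omega)
  calc ‖φ x + ψ x‖ ≤ ‖φ x‖ + ‖ψ x‖ := norm_add_le _ _
    _ ≤ C1 * (1 + ‖x‖) ^ k1 + C2 * (1 + ‖x‖) ^ k2 := add_le_add (h1 x) (h2 x)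
    _ ≤ |C1| * (1 + ‖x‖) ^ k1 + |C2| * (1 + ‖x‖) ^ k2 := by gcongr <;> exact le_abs_self _
    _ ≤ |C1| * (1 + ‖x‖) ^ (k1 + k2) + |C2| * (1 + ‖x‖) ^ (k1 + k2) := by gcongr
    _ = _ := by ring

lemma mul {R : Type*} [NormedRing R] {φ ψ : V → R} (h1 : PolyG φ) (h2 : PolyG ψ) :
    PolyG (fun x => φ x * ψ x) := by
  obtain ⟨c1, C1, k1, h1⟩ := h1
  obtain ⟨c2, C2, k2, h2⟩ := h2
  refine ⟨c1.mul c2, C1 * C2, k1 + k2, fun x => ?_⟩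
  calc ‖φ x * ψ x‖ ≤ ‖φ x‖ * ‖ψ x‖ := norm_mul_le _ _
    _ ≤ (C1 * (1 + ‖x‖) ^ k1) * (C2 * (1 + ‖x‖) ^ k2) :=
        mul_le_mul (h1 x) (h2 x) (norm_nonneg _) ((norm_nonneg _).trans (h1 x))
    _ = _ := by ring

lemma pow {R : Type*} [NormedRing R] {φ : V → R} (h : PolyG φ) (k : ℕ) :
    PolyG (fun x => φ x ^ k) := by
  induction k with
  | zero => simpa using PolyG.const (V := V) (1 : R)
  | succ k ih => simpa [pow_succ] using ih.mul h

lemma sum {ι : Type*} {s : Finset ι} {φ : ι → V → F} (h : ∀ i ∈ s, PolyG (φ i)) :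
    PolyG (fun x => ∑ i ∈ s, φ i x) := by
  classical
  induction s using Finset.induction_on with
  | empty => simpa using PolyG.const (V := V) (0 : F)
  | insert a s ha ih =>
    simp only [Finset.sum_insert ha]
    exact (h a (by simp)).add (ih fun i hi => h i (by simp [hi]))

lemma neg {φ : V → F} (h : PolyG φ) : PolyG (fun x => - φ x) := by
  obtain ⟨c1, C1, k1, h1⟩ := h
  exact ⟨c1.neg, C1, k1, by simpa using h1⟩

lemma sub {φ ψ : V → F} (h1 : PolyG φ) (h2 : PolyG ψ) : PolyG (fun x => φ x - ψ x) := by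
  simpa [sub_eq_add_neg] using h1.add h2.neg

/-- Polynomial growth is inherited under domination of norms. -/
lemma of_le {F' : Type*} [NormedAddCommGroup F'] {φ : V → F} {ψ : V → F'} (h : PolyG φ)
    (hc : Continuous ψ) (hle : ∀ x, ‖ψ x‖ ≤ ‖φ x‖) : PolyG ψ := by
  obtain ⟨_, C, k, h⟩ := h
  exact ⟨hc, C, k, fun x => (hle x).trans (h x)⟩

lemma norm_id : PolyG (fun x : V => ‖x‖) :=
  ⟨continuous_norm, 1, 1, fun x => by simp⟩

lemma re {φ : V → ℂ} (h : PolyG φ) : PolyG (fun x => (φ x).re) :=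
  h.of_le (Complex.continuous_re.comp h.1) fun _ => by
    simpa using Complex.abs_re_le_norm _

end PolyG

variable {N : ℕ}

/-- The normalizing constant of the standard Gaussian density on `ℝ^N`. -/
def gaussZ (N : ℕ) : ℝ := ∫ x : EuclideanSpace ℝ (Fin N), Real.exp (-‖x‖ ^ 2 / 2)

/-- The density of the standard Gaussian measure on `ℝ^N`. -/
def gaussD (x : EuclideanSpace ℝ (Fin N)) : ℝ := (gaussZ N)⁻¹ * Real.exp (-‖x‖ ^ 2 / 2)

/-- The standard Gaussian measure on `ℝ^N`, given by its density. -/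
def gaussM (N : ℕ) : Measure (EuclideanSpace ℝ (Fin N)) :=
  volume.withDensity fun x => ENNReal.ofReal (gaussD x)

lemma gaussZ_pos : 0 < gaussZ N := by
  have h := GaussianFourier.integral_rexp_neg_mul_sq_norm (V := EuclideanSpace ℝ (Fin N))
    (b := 1/2) (by norm_num)
  have h2 : gaussZ N = (Real.pi / (1/2)) ^ ((Module.finrank ℝ (EuclideanSpace ℝ (Fin N)) : ℝ) / 2) := by
    rw [← h, gaussZ]
    congr 1; ext x; congr 1; ring
  rw [h2]
  positivity

lemma gaussD_pos (x : EuclideanSpace ℝ (Fin N)) : 0 < gaussD x :=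
  mul_pos (inv_pos.2 gaussZ_pos) (Real.exp_pos _)

lemma continuous_gaussD : Continuous (gaussD (N := N)) := by
  unfold gaussD; fun_prop

lemma integrable_exp_quarter :
    Integrable (fun x : EuclideanSpace ℝ (Fin N) => Real.exp (-‖x‖ ^ 2 / 4)) := by
  have h := (GaussianFourier.integrable_cexp_neg_mul_sq_norm_add (V := EuclideanSpace ℝ (Fin N))
    (b := 1/4) (by norm_num) 0 0).norm
  refine h.congr (Filter.Eventually.of_forall fun x => ?_)
  simp only [Complex.norm_exp]
  congr 1
  have : (-(1/4 : ℂ) * (‖x‖ : ℂ) ^ 2 + 0 * ((inner ℝ 0 x : ℝ) : ℂ)) = ((-‖x‖^2/4 : ℝ) : ℂ) := by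
    push_cast; ring
  rw [this, Complex.ofReal_re]

lemma poly_exp_bound (k : ℕ) (r : ℝ) (hr : 0 ≤ r) :
    (1 + r) ^ k * Real.exp (-r ^ 2 / 2) ≤ (k.factorial * Real.exp 2) * Real.exp (-r ^ 2 / 4) := by
  have h1 : (1 + r) ^ k ≤ k.factorial * Real.exp (1 + r) := by
    have := Real.pow_div_factorial_le_exp (1 + r) (by linarith) k
    rwa [div_le_iff₀ (by positivity), mul_comm] at this
  calc (1 + r) ^ k * Real.exp (-r ^ 2 / 2)
      ≤ k.factorial * Real.exp (1 + r) * Real.exp (-r ^ 2 / 2) := by gcongr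
    _ = k.factorial * Real.exp (1 + r + -r ^ 2 / 2) := by rw [mul_assoc, ← Real.exp_add]
    _ ≤ k.factorial * Real.exp (2 + -r ^ 2 / 4) := by
        refine mul_le_mul_of_nonneg_left (Real.exp_le_exp.2 ?_) (by positivity)
        nlinarith [sq_nonneg (r - 2)]
    _ = _ := by rw [Real.exp_add]; ring

lemma PolyG.integrable_smul {F : Type*} [NormedAddCommGroup F] [NormedSpace ℝ F]
    {φ : EuclideanSpace ℝ (Fin N) → F} (h : PolyG φ) :
    Integrable (fun x => gaussD x • φ x) := by
  obtain ⟨hc, C, k, h⟩ := h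
  refine (integrable_exp_quarter.const_mul
    ((gaussZ N)⁻¹ * (|C| * (k.factorial * Real.exp 2)))).mono'
    (continuous_gaussD.smul hc).aestronglyMeasurable (Filter.Eventually.of_forall fun x => ?_)
  rw [norm_smul, Real.norm_of_nonneg (gaussD_pos x).le, gaussD]
  have hz := inv_pos.2 (gaussZ_pos (N := N))
  calc (gaussZ N)⁻¹ * Real.exp (-‖x‖ ^ 2 / 2) * ‖φ x‖
      ≤ (gaussZ N)⁻¹ * Real.exp (-‖x‖ ^ 2 / 2) * (|C| * (1 + ‖x‖) ^ k) := by
        gcongr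
        exact (h x).trans (by gcongr; exact le_abs_self _)
    _ = (gaussZ N)⁻¹ * (|C| * ((1 + ‖x‖) ^ k * Real.exp (-‖x‖ ^ 2 / 2))) := by ring
    _ ≤ (gaussZ N)⁻¹ * (|C| * ((k.factorial * Real.exp 2) * Real.exp (-‖x‖ ^ 2 / 4))) := by
        have := poly_exp_bound k _ (norm_nonneg x)
        exact mul_le_mul_of_nonneg_left (mul_le_mul_of_nonneg_left this (abs_nonneg _)) hz.le
    _ = _ := by ring

lemma integral_gaussM {F : Type*} [NormedAddCommGroup F] [NormedSpace ℝ F]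
    (φ : EuclideanSpace ℝ (Fin N) → F) :
    ∫ x, φ x ∂(gaussM N) = ∫ x, gaussD x • φ x := by
  rw [gaussM, integral_withDensity_eq_integral_toReal_smul₀]
  · simp only [ENNReal.toReal_ofReal (gaussD_pos _).le]
  · exact continuous_gaussD.measurable.ennreal_ofReal.aemeasurable
  · simp

lemma PolyG.integrable {F : Type*} [NormedAddCommGroup F] [NormedSpace ℝ F]
    {φ : EuclideanSpace ℝ (Fin N) → F} (h : PolyG φ) : Integrable φ (gaussM N) := by
  rw [gaussM, integrable_withDensity_iff_integrable_smul₀']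
  · simpa only [ENNReal.toReal_ofReal (gaussD_pos _).le] using h.integrable_smul
  · exact continuous_gaussD.measurable.ennreal_ofReal.aemeasurable
  · simp

instance : IsProbabilityMeasure (gaussM N) := by
  constructor
  rw [gaussM, withDensity_apply _ MeasurableSet.univ, Measure.restrict_univ,
    ← ofReal_integral_eq_lintegral_ofReal]
  · have : ∫ x : EuclideanSpace ℝ (Fin N), gaussD x = 1 := by
      simp only [gaussD]
      rw [integral_const_mul]
      exact inv_mul_cancel₀ gaussZ_pos.ne'
    simp [this]
  · simpa using (PolyG.const (V := EuclideanSpace ℝ (Fin N)) (1 : ℝ)).integrable_smul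
  · exact Filter.Eventually.of_forall fun x => (gaussD_pos x).le

/-- Gaussian integration by parts (Stein's identity) in the direction `v`. -/
lemma gauss_ibp (v : EuclideanSpace ℝ (Fin N)) {φ φ' : EuclideanSpace ℝ (Fin N) → ℂ}
    (hφ : PolyG φ) (hφ' : PolyG φ') (hd : ∀ x, HasLineDerivAt ℝ φ (φ' x) x v) :
    ∫ x, (⟪v, x⟫ : ℂ) * φ x ∂(gaussM N) = ∫ x, φ' x ∂(gaussM N) := by
  have hin : PolyG (fun x : EuclideanSpace ℝ (Fin N) => ((⟪v, x⟫ : ℝ) : ℂ)) := by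
    refine ((PolyG.const ‖v‖).mul PolyG.norm_id).of_le (by fun_prop) fun x => ?_
    simpa using abs_real_inner_le_norm v x
  have hg : ∀ x : EuclideanSpace ℝ (Fin N),
      HasLineDerivAt ℝ gaussD (-(⟪v, x⟫ * gaussD x)) x v := by
    intro x
    have h1 : HasFDerivAt (fun y : EuclideanSpace ℝ (Fin N) => ‖y‖ ^ 2) (2 • innerSL ℝ x) x :=
      (hasStrictFDerivAt_norm_sq x).hasFDerivAt
    have h2 := (((h1.const_mul (-1/2)).exp).const_mul (gaussZ N)⁻¹).hasLineDerivAt v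
    convert! h2 using 1
    · ext y; simp only [gaussD]; congr 2; ring
    · simp only [gaussD, smul_apply, innerSL_apply_apply, smul_eq_mul,
        nsmul_eq_mul, real_inner_comm x v]
      have : -‖x‖ ^ 2 / 2 = -1/2 * ‖x‖^2 := by ring
      rw [this]; push_cast; ring
  have key := integral_bilinear_hasLineDerivAt_right_eq_neg_left_of_integrable
    (μ := (volume : Measure (EuclideanSpace ℝ (Fin N)))) (f := gaussD)
    (f' := fun x => -(⟪v, x⟫ * gaussD x)) (g := φ) (g' := φ') (v := v)
    (B := ContinuousLinearMap.lsmul ℝ ℝ) ?_ ?_ ?_ (fun x _ => hg x) (fun x _ => hd x)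
  · simp only [ContinuousLinearMap.lsmul_apply] at key
    rw [integral_gaussM, integral_gaussM, key, ← integral_neg]
    congr 1; ext x
    simp only [Complex.real_smul]; push_cast; ring
  · refine (hin.mul hφ).integrable_smul.neg.congr (Filter.Eventually.of_forall fun x => ?_)
    simp only [ContinuousLinearMap.lsmul_apply, Pi.neg_apply, Complex.real_smul]; push_cast; ring
  · simpa using hφ'.integrable_smul
  · simpa using hφ.integrable_smul

end

/-! ### Completeness relations for traceless Hermitian matrices -/

noncomputable section

section Algebra
variable {n N : ℕ} {f : EuclideanSpace ℝ (Fin N) →ₗ[ℝ] Matrix (Fin n) (Fin n) ℂ}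

/-- The image of the `i`-th standard basis vector: these matrices form an orthonormal basis of the
traceless Hermitian matrices. -/
def hb (f : EuclideanSpace ℝ (Fin N) →ₗ[ℝ] Matrix (Fin n) (Fin n) ℂ) (i : Fin N) :
    Matrix (Fin n) (Fin n) ℂ := f (EuclideanSpace.single i 1)

lemma f_eq_sum (f : EuclideanSpace ℝ (Fin N) →ₗ[ℝ] Matrix (Fin n) (Fin n) ℂ)
    (x : EuclideanSpace ℝ (Fin N)) : f x = ∑ i, (x i : ℂ) • hb f i := by
  have h : x = ∑ i, x i • EuclideanSpace.single i (1 : ℝ) := by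
    ext j; simp [Pi.single_apply]
  conv_lhs => rw [h]
  rw [map_sum]
  refine Finset.sum_congr rfl fun i _ => ?_
  rw [map_smul, hb]
  ext p q; simp

/-- The trace of a product of two Hermitian matrices is real. -/
lemma trace_mul_real {A B : Matrix (Fin n) (Fin n) ℂ} (hA : A.IsHermitian) (hB : B.IsHermitian) :
    (((A * B).trace.re : ℝ) : ℂ) = (A * B).trace := by
  rw [← Complex.conj_eq_iff_re]
  have : star (A * B).trace = (A * B).trace := by
    rw [← Matrix.trace_conjTranspose, Matrix.conjTranspose_mul, hA.eq, hB.eq, Matrix.trace_mul_comm]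
  exact this

lemma complete_herm (hf : IsHermParam f) {A : Matrix (Fin n) (Fin n) ℂ} (hA : A.IsHermitian)
    (h0 : A.trace = 0) : ∑ i, (hb f i * A).trace • hb f i = A := by
  obtain ⟨y, rfl⟩ := hf.surj A hA h0
  rw [f_eq_sum f y]
  refine Finset.sum_congr rfl fun i _ => ?_
  have h : (hb f i * f y).trace = (y i : ℂ) := by
    rw [hb, ← trace_mul_real (hf.herm _) (hf.herm _), hf.inner_eq]
    simp [EuclideanSpace.inner_single_left]
  rw [← f_eq_sum, h]

lemma complete_herm' (hn : 0 < n) (hf : IsHermParam f) {A : Matrix (Fin n) (Fin n) ℂ}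
    (hA : A.IsHermitian) :
    ∑ i, (hb f i * A).trace • hb f i = A - (A.trace / n) • 1 := by
  have hn' : (n : ℂ) ≠ 0 := by exact_mod_cast hn.ne'
  have hr : star (A.trace / n : ℂ) = A.trace / n := by
    have : star A.trace = A.trace := by rw [← Matrix.trace_conjTranspose, hA.eq]
    simp only [star_div₀, this, star_natCast]
  have h1 : (A - (A.trace / n) • 1).IsHermitian := by
    refine hA.sub ?_
    rw [Matrix.IsHermitian, Matrix.conjTranspose_smul, hr, Matrix.conjTranspose_one]
  have h2 : (A - (A.trace / n) • 1).trace = 0 := by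
    rw [Matrix.trace_sub, Matrix.trace_smul, Matrix.trace_one]
    simp; field_simp; simp
  rw [← complete_herm hf h1 h2]
  refine Finset.sum_congr rfl fun i _ => ?_
  have : (hb f i).trace = 0 := hf.traceless _
  simp [mul_sub, Matrix.trace_sub, this]

/-- The completeness relation of the orthonormal basis `hb f`, extended complex-linearly to all
matrices. -/
lemma complete (hn : 0 < n) (hf : IsHermParam f) (A : Matrix (Fin n) (Fin n) ℂ) :
    ∑ i, (hb f i * A).trace • hb f i = A - (A.trace / n) • 1 := by
  have hA : A = (realPart A : Matrix (Fin n) (Fin n) ℂ) +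
      Complex.I • (imaginaryPart A : Matrix (Fin n) (Fin n) ℂ) :=
    (realPart_add_I_smul_imaginaryPart A).symm
  have h1 := complete_herm' hn hf (A := (realPart A : Matrix (Fin n) (Fin n) ℂ)) (realPart A).2
  have h2 := complete_herm' hn hf (A := (imaginaryPart A : Matrix (Fin n) (Fin n) ℂ))
    (imaginaryPart A).2
  generalize (realPart A : Matrix (Fin n) (Fin n) ℂ) = H at *
  generalize (imaginaryPart A : Matrix (Fin n) (Fin n) ℂ) = K at *
  subst hA
  have : ∀ i, (hb f i * (H + Complex.I • K)).trace • hb f i =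
      (hb f i * H).trace • hb f i + Complex.I • ((hb f i * K).trace • hb f i) := by
    intro i
    simp [mul_add, Matrix.trace_add, add_smul, smul_smul]
  simp only [this, Finset.sum_add_distrib, ← Finset.smul_sum, h1, h2]
  simp only [Matrix.trace_add, Matrix.trace_smul, smul_sub, smul_smul, add_div, add_smul,
    smul_eq_mul, mul_div_assoc]
  abel

/-- The first completeness relation: the sum of `Tr (E A) Tr (E B)` over the orthonormal basis. -/
lemma complete_trace_trace (hn : 0 < n) (hf : IsHermParam f) (A B : Matrix (Fin n) (Fin n) ℂ) :
    ∑ i, (hb f i * A).trace * (hb f i * B).trace = (A * B).trace - A.trace * B.trace / n := by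
  have h := congrArg (fun M => (M * B).trace) (complete hn hf A)
  simp only [Finset.sum_mul, Matrix.trace_sum, Matrix.smul_mul, Matrix.trace_smul, sub_mul,
    Matrix.trace_sub, one_mul, smul_eq_mul] at h
  rw [h]; ring

lemma complete_entry (hn : 0 < n) (hf : IsHermParam f) (p q r s : Fin n) :
    ∑ i, hb f i q p * hb f i r s =
      (if p = r ∧ q = s then 1 else 0) - (if p = q then 1 else 0) / n * (if r = s then 1 else 0) := by
  have h := congrFun (congrFun (complete hn hf (Matrix.single p q 1)) r) s
  simp only [Matrix.sum_apply, Matrix.smul_apply, Matrix.sub_apply, smul_eq_mul,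
    Matrix.one_apply, Matrix.trace_mul_single] at h
  simp only [MulOpposite.op_one, one_smul] at h
  rw [h, Matrix.single_apply]
  congr 2
  by_cases hpq : p = q
  · subst hpq; simp
  · simp [hpq]

/-- The second completeness relation: the sum of `Tr (E A E B)` over the orthonormal basis. -/
lemma complete_sandwich (hn : 0 < n) (hf : IsHermParam f) (A B : Matrix (Fin n) (Fin n) ℂ) :
    ∑ i, (hb f i * A * hb f i * B).trace = A.trace * B.trace - (A * B).trace / n := by
  have h : ∑ i, hb f i * A * hb f i = A.trace • 1 - (n : ℂ)⁻¹ • A := by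
    ext p s
    simp only [Matrix.sum_apply, Matrix.mul_apply, Finset.sum_mul]
    rw [Finset.sum_comm]
    have : ∀ y, ∑ i, ∑ k, hb f i p k * A k y * hb f i y s =
        ∑ k, A k y * ((if k = y ∧ p = s then 1 else 0)
          - (if k = p then 1 else 0) / n * (if y = s then 1 else 0)) := by
      intro y
      rw [Finset.sum_comm]
      refine Finset.sum_congr rfl fun k _ => ?_
      rw [← complete_entry hn hf, Finset.mul_sum]
      refine Finset.sum_congr rfl fun i _ => ?_
      ring
    simp only [this, mul_sub, Finset.sum_sub_distrib]
    simp only [Matrix.sub_apply, Matrix.smul_apply, Matrix.one_apply, smul_eq_mul, Matrix.trace,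
      Matrix.diag]
    congr 1
    · by_cases hps : p = s
      · simp [hps]
      · simp [hps]
    · simp [div_eq_mul_inv, mul_comm]
  simp only [← Matrix.trace_sum, ← Finset.sum_mul, h]
  simp [sub_mul, Matrix.trace_sub]
  ring

end Algebra

end

/-! ### Traces of powers and their derivatives -/

noncomputable section

section SD
open scoped Matrix.Norms.Operator
variable {n N : ℕ} {f : EuclideanSpace ℝ (Fin N) →ₗ[ℝ] Matrix (Fin n) (Fin n) ℂ}

/-- The matrix `f x / √n`, whose spectrum is of order one for a Gaussian `x`. -/
def scaled (f : EuclideanSpace ℝ (Fin N) →ₗ[ℝ] Matrix (Fin n) (Fin n) ℂ)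
    (x : EuclideanSpace ℝ (Fin N)) : Matrix (Fin n) (Fin n) ℂ := (((√n)⁻¹ : ℝ) : ℂ) • f x

/-- The normalized trace of the `a`-th power of `scaled f x`. -/
def trN (f : EuclideanSpace ℝ (Fin N) →ₗ[ℝ] Matrix (Fin n) (Fin n) ℂ) (a : ℕ)
    (x : EuclideanSpace ℝ (Fin N)) : ℂ := (n : ℂ)⁻¹ * (scaled f x ^ a).trace

/-- The product of the normalized traces of powers, over a multiset of exponents. -/
def trP (f : EuclideanSpace ℝ (Fin N) →ₗ[ℝ] Matrix (Fin n) (Fin n) ℂ) (m : Multiset ℕ)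
    (x : EuclideanSpace ℝ (Fin N)) : ℂ := (m.map fun a => trN f a x).prod

/-- The Gaussian expectation of `trP f m`. -/
def mom (f : EuclideanSpace ℝ (Fin N) →ₗ[ℝ] Matrix (Fin n) (Fin n) ℂ) (m : Multiset ℕ) : ℂ :=
  ∫ x, trP f m x ∂(gaussM N)

lemma trP_cons (a : ℕ) (m : Multiset ℕ) (x : EuclideanSpace ℝ (Fin N)) :
    trP f (a ::ₘ m) x = trN f a x * trP f m x := by simp [trP]

lemma PolyG.linear {V E F : Type*} [NormedAddCommGroup V] [NormedAddCommGroup E] [NormedSpace ℝ E]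
    [FiniteDimensional ℝ E] [NormedAddCommGroup F] [NormedSpace ℝ F] (L : E →ₗ[ℝ] F)
    {φ : V → E} (h : PolyG φ) : PolyG (fun x => L (φ x)) := by
  set g := LinearMap.toContinuousLinearMap L
  obtain ⟨hc, C, k, h⟩ := h
  refine ⟨g.continuous.comp hc, ‖g‖ * C, k, fun x => ?_⟩
  calc ‖L (φ x)‖ = ‖g (φ x)‖ := rfl
    _ ≤ ‖g‖ * ‖φ x‖ := g.le_opNorm _
    _ ≤ ‖g‖ * (C * (1 + ‖x‖) ^ k) := by gcongr; exact h x
    _ = _ := by ring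

lemma polyG_scaled : PolyG (scaled f) := by
  have h : PolyG (fun x => f x) :=
    PolyG.linear f (φ := fun x => x) ⟨continuous_id, 1, 1, fun x => by simp⟩
  have h2 := (PolyG.const (V := EuclideanSpace ℝ (Fin N))
    ((((√n)⁻¹ : ℝ) : ℂ) • (1 : Matrix (Fin n) (Fin n) ℂ))).mul h
  simp only [smul_mul_assoc, one_mul] at h2
  exact h2

lemma polyG_trace {φ : EuclideanSpace ℝ (Fin N) → Matrix (Fin n) (Fin n) ℂ} (h : PolyG φ) :
    PolyG (fun x => (φ x).trace) :=
  PolyG.linear ((Matrix.traceLinearMap (Fin n) ℂ ℂ).restrictScalars ℝ) h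

lemma polyG_trN (a : ℕ) : PolyG (trN f a) :=
  (PolyG.const _).mul (polyG_trace (polyG_scaled.pow a))

lemma polyG_trP (m : Multiset ℕ) : PolyG (trP f m) := by
  induction m using Multiset.induction_on with
  | empty =>
    have : trP f 0 = fun _ => 1 := by ext x; simp [trP]
    rw [this]; exact PolyG.const 1
  | cons a m ih =>
    have := (polyG_trN (f := f) a).mul ih
    simpa only [← trP_cons] using this

lemma polyG_trFY (A : Matrix (Fin n) (Fin n) ℂ) (a : ℕ) :
    PolyG (fun x => (A * scaled f x ^ a).trace) :=
  polyG_trace ((PolyG.const A).mul (polyG_scaled.pow a))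

lemma polyG_sandwich (A B : Matrix (Fin n) (Fin n) ℂ) (a b : ℕ) :
    PolyG (fun x => (A * scaled f x ^ a * B * scaled f x ^ b).trace) :=
  polyG_trace ((((PolyG.const A).mul (polyG_scaled.pow a)).mul (PolyG.const B)).mul
    (polyG_scaled.pow b))

lemma deriv_scaled (x v : EuclideanSpace ℝ (Fin N)) :
    HasDerivAt (fun t : ℝ => scaled f (x + t • v)) (scaled f v) 0 := by
  have : (fun t : ℝ => scaled f (x + t • v)) = fun t : ℝ => scaled f x + t • scaled f v := by
    ext t : 1
    simp only [scaled, map_add, map_smul, smul_add]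
    rw [smul_comm]
  rw [this]
  have h := ((hasDerivAt_id (0 : ℝ)).smul_const (scaled f v)).const_add (scaled f x)
  rw [one_smul] at h
  exact h

lemma deriv_trace {φ : ℝ → Matrix (Fin n) (Fin n) ℂ} {φ' : Matrix (Fin n) (Fin n) ℂ} {t : ℝ}
    (h : HasDerivAt φ φ' t) : HasDerivAt (fun s => (φ s).trace) φ'.trace t := by
  have := (LinearMap.toContinuousLinearMap
    ((Matrix.traceLinearMap (Fin n) ℂ ℂ).restrictScalars ℝ)).hasFDerivAt.comp_hasDerivAt t h
  exact this

lemma deriv_scaled_pow (a : ℕ) (x v : EuclideanSpace ℝ (Fin N)) :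
    HasDerivAt (fun t : ℝ => scaled f (x + t • v) ^ a)
      (∑ j ∈ Finset.range a, scaled f x ^ (a - 1 - j) * scaled f v * scaled f x ^ j) 0 := by
  have h := (deriv_scaled (f := f) x v).fun_pow' a
  simp only [zero_smul, add_zero] at h
  exact h

lemma deriv_trFY (A : Matrix (Fin n) (Fin n) ℂ) (a : ℕ) (x v : EuclideanSpace ℝ (Fin N)) :
    HasDerivAt (fun t : ℝ => (A * scaled f (x + t • v) ^ a).trace)
      (∑ j ∈ Finset.range a,
        (A * scaled f x ^ (a - 1 - j) * scaled f v * scaled f x ^ j).trace) 0 := by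
  have h := deriv_trace ((deriv_scaled_pow (f := f) a x v).const_mul A)
  simpa only [Finset.mul_sum, Matrix.trace_sum, ← mul_assoc] using h

lemma deriv_trN (a : ℕ) (x v : EuclideanSpace ℝ (Fin N)) :
    HasDerivAt (fun t : ℝ => trN f a (x + t • v))
      ((n : ℂ)⁻¹ * (a * (scaled f v * scaled f x ^ (a - 1)).trace)) 0 := by
  have h := (deriv_trFY (f := f) 1 a x v).const_mul (n : ℂ)⁻¹
  simp only [one_mul] at h
  refine h.congr_deriv ?_
  congr 1
  symm
  rw [← nsmul_eq_mul, ← Finset.card_range a, ← Finset.sum_const]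
  simp only [Finset.card_range]
  refine Finset.sum_congr rfl fun j hj => ?_
  rw [Matrix.trace_mul_cycle, Matrix.trace_mul_comm, ← pow_add]
  congr 3
  have := Finset.mem_range.1 hj
  omega

lemma deriv_trP (m : Multiset ℕ) (x v : EuclideanSpace ℝ (Fin N)) :
    HasDerivAt (fun t : ℝ => trP f m (x + t • v))
      (m.map fun b => trP f (m.erase b) x *
        ((n : ℂ)⁻¹ * (b * (scaled f v * scaled f x ^ (b - 1)).trace))).sum 0 := by
  have h := HasFDerivAt.multiset_prod (u := m)
    (g := fun (a : ℕ) (t : ℝ) => trN f a (x + t • v)) (x := (0 : ℝ))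
    (fun b _ => (deriv_trN (f := f) b x v).hasFDerivAt)
  have h2 := h.hasDerivAt
  convert! h2 using 1
  have : ∀ (s : Multiset (ℝ →L[ℝ] ℂ)), s.sum 1 = (s.map fun L => L 1).sum := by
    intro s
    induction s using Multiset.induction_on with
    | empty => simp
    | cons a s ih => simp [ih]
  rw [this, Multiset.map_map]
  simp [trP]

end SD

end

/-! ### The Schwinger–Dyson equation -/

noncomputable section

section SD2
variable {n N : ℕ} {f : EuclideanSpace ℝ (Fin N) →ₗ[ℝ] Matrix (Fin n) (Fin n) ℂ}

lemma multiset_sum_polyG {V : Type*} [NormedAddCommGroup V] (m : Multiset ℕ) {φ : ℕ → V → ℂ}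
    (h : ∀ i, PolyG (φ i)) : PolyG (fun x => (m.map fun i => φ i x).sum) := by
  induction m using Multiset.induction_on with
  | empty => simpa using PolyG.const (V := V) (0 : ℂ)
  | cons a m ih => simpa using (h a).add ih

lemma integral_multiset_sum (m : Multiset ℕ) {φ : ℕ → EuclideanSpace ℝ (Fin N) → ℂ}
    (h : ∀ i, PolyG (φ i)) :
    ∫ x, (m.map fun i => φ i x).sum ∂(gaussM N) = (m.map fun i => ∫ x, φ i x ∂(gaussM N)).sum := by
  induction m using Multiset.induction_on with
  | empty => simp
  | cons a m ih =>
    simp only [Multiset.map_cons, Multiset.sum_cons]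
    rw [integral_add (h a).integrable (multiset_sum_polyG m h).integrable, ih]

lemma multiset_sum_swap {ι : Type*} (s : Finset ι) (m : Multiset ℕ) (A : ι → ℂ) (g : ι → ℕ → ℂ) :
    ∑ i ∈ s, A i * (m.map (g i)).sum = (m.map fun b => ∑ i ∈ s, A i * g i b).sum := by
  induction m using Multiset.induction_on with
  | empty => simp
  | cons a m ih => simp [mul_add, Finset.sum_add_distrib, ih]

lemma inv_sqrt_sq (n : ℕ) : ((((√n)⁻¹ : ℝ) : ℂ)) * (((√n)⁻¹ : ℝ) : ℂ) = (n : ℂ)⁻¹ := by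
  rw [← Complex.ofReal_mul, ← mul_inv, Real.mul_self_sqrt (Nat.cast_nonneg n)]
  push_cast; rfl

/-- The sum over the orthonormal basis of the derivatives produced by integrating by parts: the
matrix basis is eliminated by the two completeness relations. -/
lemma sum_deriv (hn : 0 < n) (hf : IsHermParam f) (a : ℕ) (m : Multiset ℕ)
    (x : EuclideanSpace ℝ (Fin N)) :
    (n : ℂ)⁻¹ * (((√n)⁻¹ : ℝ) : ℂ) * ∑ i, ((∑ j ∈ Finset.range a, (hb f i * scaled f x ^ (a - 1 - j) *
          scaled f (EuclideanSpace.single i 1) * scaled f x ^ j).trace) * trP f m x +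
        (hb f i * scaled f x ^ a).trace * (m.map fun b : ℕ => trP f (m.erase b) x *
          ((n : ℂ)⁻¹ * (b * (scaled f (EuclideanSpace.single i 1) *
            scaled f x ^ (b - 1)).trace))).sum) =
      ∑ j ∈ Finset.range a, trP f (j ::ₘ (a - 1 - j) ::ₘ m) x
        - (a : ℂ) / n ^ 2 * trP f ((a - 1) ::ₘ m) x
        + ((n : ℂ) ^ 2)⁻¹ * (m.map fun b : ℕ => (b : ℂ) * (trP f ((a + b - 1) ::ₘ m.erase b) x
          - trP f (a ::ₘ (b - 1) ::ₘ m.erase b) x)).sum := by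
  have hn' : (n : ℂ) ≠ 0 := by exact_mod_cast hn.ne'
  set c : ℂ := (((√n)⁻¹ : ℝ) : ℂ) with hc
  have hcc : c * c = (n : ℂ)⁻¹ := inv_sqrt_sq n
  have hs : ∀ i, scaled f (EuclideanSpace.single i 1) = c • hb f i := fun i => rfl
  simp only [hs]
  set Y := scaled f x with hY
  rw [Finset.sum_add_distrib, mul_add]
  congr 1
  · rw [← Finset.sum_mul, Finset.sum_comm]
    have h1 : ∀ j ∈ Finset.range a, ∑ i, (hb f i * Y ^ (a - 1 - j) * (c • hb f i) * Y ^ j).trace =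
        c * ((Y ^ (a - 1 - j)).trace * (Y ^ j).trace - (Y ^ (a - 1)).trace / n) := by
      intro j hj
      have hj' := Finset.mem_range.1 hj
      have := complete_sandwich hn hf (Y ^ (a - 1 - j)) (Y ^ j)
      rw [← pow_add, show a - 1 - j + j = a - 1 by omega] at this
      rw [← this, Finset.mul_sum]
      refine Finset.sum_congr rfl fun i _ => ?_
      simp
    rw [Finset.sum_congr rfl h1, ← Finset.mul_sum, Finset.sum_sub_distrib]
    simp only [trP_cons, Finset.sum_const, Finset.card_range, nsmul_eq_mul]
    have h2 : ∑ j ∈ Finset.range a, trN f j x * (trN f (a - 1 - j) x * trP f m x) =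
        ((n : ℂ)⁻¹ * (n : ℂ)⁻¹) * (∑ j ∈ Finset.range a, (Y ^ (a - 1 - j)).trace * (Y ^ j).trace)
          * trP f m x := by
      rw [Finset.mul_sum, Finset.sum_mul]
      refine Finset.sum_congr rfl fun j _ => ?_
      simp only [trN, ← hY]; ring
    rw [h2]
    simp only [trN, ← hY]
    generalize ∑ j ∈ Finset.range a, (Y ^ (a - 1 - j)).trace * (Y ^ j).trace = S
    calc _ = (n : ℂ)⁻¹ * (c * c) * ((S - a * ((Y ^ (a - 1)).trace / n)) * trP f m x) := by ring
      _ = _ := by rw [hcc]; field_simp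
  · rw [multiset_sum_swap]
    simp only [← Multiset.sum_map_mul_left]
    congr 1
    refine Multiset.map_congr rfl fun b _ => ?_
    have h1 : ∑ i, (hb f i * Y ^ a).trace * (trP f (m.erase b) x *
        ((n : ℂ)⁻¹ * (b * (c • hb f i * Y ^ (b - 1)).trace))) =
        trP f (m.erase b) x * (n : ℂ)⁻¹ * b * c *
          ((Y ^ a * Y ^ (b - 1)).trace - (Y ^ a).trace * (Y ^ (b - 1)).trace / n) := by
      rw [← complete_trace_trace hn hf, Finset.mul_sum]
      refine Finset.sum_congr rfl fun i _ => ?_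
      simp only [Matrix.smul_mul, Matrix.trace_smul, smul_eq_mul]; ring
    rw [h1]
    rcases Nat.eq_zero_or_pos b with rfl | hb0
    · simp
    · rw [← pow_add, show a + (b - 1) = a + b - 1 by omega]
      simp only [trP_cons, trN, ← hY]
      calc _ = (n : ℂ)⁻¹ * (c * c) * (trP f (m.erase b) x * (n : ℂ)⁻¹ * b *
            ((Y ^ (a + b - 1)).trace - (Y ^ a).trace * (Y ^ (b - 1)).trace / n)) := by ring
        _ = _ := by rw [hcc]; field_simp

/-- The Schwinger–Dyson (loop) equation for the traceless Gaussian Hermitian ensemble. -/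
lemma schwinger_dyson (hn : 0 < n) (hf : IsHermParam f) (a : ℕ) (m : Multiset ℕ) :
    mom f ((a + 1) ::ₘ m) = ∑ j ∈ Finset.range a, mom f (j ::ₘ (a - 1 - j) ::ₘ m)
        - (a : ℂ) / n ^ 2 * mom f ((a - 1) ::ₘ m)
        + ((n : ℂ) ^ 2)⁻¹ * (m.map fun b : ℕ => (b : ℂ) * (mom f ((a + b - 1) ::ₘ m.erase b)
          - mom f (a ::ₘ (b - 1) ::ₘ m.erase b))).sum := by
  have hP := fun m => polyG_trP (f := f) m
  set c : ℂ := (((√n)⁻¹ : ℝ) : ℂ) with hc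
  -- the right-hand side is the expectation of the pointwise identity `sum_deriv`
  have hR : ∑ j ∈ Finset.range a, mom f (j ::ₘ (a - 1 - j) ::ₘ m)
        - (a : ℂ) / n ^ 2 * mom f ((a - 1) ::ₘ m)
        + ((n : ℂ) ^ 2)⁻¹ * (m.map fun b : ℕ => (b : ℂ) * (mom f ((a + b - 1) ::ₘ m.erase b)
          - mom f (a ::ₘ (b - 1) ::ₘ m.erase b))).sum =
      ∫ x, (∑ j ∈ Finset.range a, trP f (j ::ₘ (a - 1 - j) ::ₘ m) x
        - (a : ℂ) / n ^ 2 * trP f ((a - 1) ::ₘ m) x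
        + ((n : ℂ) ^ 2)⁻¹ * (m.map fun b : ℕ => (b : ℂ) * (trP f ((a + b - 1) ::ₘ m.erase b) x
          - trP f (a ::ₘ (b - 1) ::ₘ m.erase b) x)).sum) ∂(gaussM N) := by
    have p1 : PolyG (fun x => ∑ j ∈ Finset.range a, trP f (j ::ₘ (a - 1 - j) ::ₘ m) x) :=
      PolyG.sum fun j _ => hP _
    have p2 : PolyG (fun x => (a : ℂ) / n ^ 2 * trP f ((a - 1) ::ₘ m) x) :=
      (PolyG.const _).mul (hP _)
    have p3 : ∀ b : ℕ, PolyG (fun x => (b : ℂ) * (trP f ((a + b - 1) ::ₘ m.erase b) x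
          - trP f (a ::ₘ (b - 1) ::ₘ m.erase b) x)) := fun b =>
      (PolyG.const _).mul ((hP _).sub (hP _))
    rw [integral_add (p1.sub p2).integrable
      ((PolyG.const _).mul (multiset_sum_polyG m p3)).integrable,
      integral_sub p1.integrable p2.integrable, integral_finsetSum _ fun j _ => (hP _).integrable,
      integral_const_mul, integral_const_mul, integral_multiset_sum m p3]
    simp only [integral_const_mul]
    simp only [integral_sub (hP _).integrable (hP _).integrable]
    rfl
  rw [hR]
  simp only [← sum_deriv hn hf]
  have hL : ∀ x, trP f ((a + 1) ::ₘ m) x = (n : ℂ)⁻¹ * c *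
      ∑ i, (⟪EuclideanSpace.single i (1 : ℝ), x⟫ : ℂ) *
        ((hb f i * scaled f x ^ a).trace * trP f m x) := by
    intro x
    rw [trP_cons, trN, pow_succ']
    nth_rewrite 1 [scaled]
    rw [f_eq_sum, Matrix.smul_mul, Matrix.trace_smul, Finset.sum_mul, Matrix.trace_sum, smul_eq_mul,
      ← hc]
    have : ∀ i, (((x i : ℝ) : ℂ) • hb f i * scaled f x ^ a).trace =
        (⟪EuclideanSpace.single i (1 : ℝ), x⟫ : ℂ) * (hb f i * scaled f x ^ a).trace := by
      intro i
      simp [EuclideanSpace.inner_single_left]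
    simp only [this, ← mul_assoc]
    rw [← Finset.sum_mul]
    ring
  rw [mom]
  simp only [hL]
  rw [integral_const_mul, integral_const_mul]
  congr 1
  have q1 : ∀ i : Fin N, PolyG (fun x => (hb f i * scaled f x ^ a).trace * trP f m x) := fun i =>
    (polyG_trFY _ _).mul (hP _)
  have q0 : ∀ i : Fin N, PolyG (fun x : EuclideanSpace ℝ (Fin N) =>
      (⟪EuclideanSpace.single i (1 : ℝ), x⟫ : ℂ)) := by
    intro i
    refine PolyG.norm_id.of_le (by fun_prop) fun x => ?_
    simpa using abs_real_inner_le_norm (EuclideanSpace.single i (1 : ℝ)) x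
  have q2 : ∀ i : Fin N, PolyG (fun x => (∑ j ∈ Finset.range a,
        (hb f i * scaled f x ^ (a - 1 - j) *
          scaled f (EuclideanSpace.single i 1) * scaled f x ^ j).trace) * trP f m x +
        (hb f i * scaled f x ^ a).trace * (m.map fun b : ℕ => trP f (m.erase b) x *
          ((n : ℂ)⁻¹ * (b * (scaled f (EuclideanSpace.single i 1) *
            scaled f x ^ (b - 1)).trace))).sum) := by
    intro i
    refine ((PolyG.sum fun j _ => ?_).mul (hP _)).add
      ((polyG_trFY _ _).mul (multiset_sum_polyG m fun b => (hP _).mul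
        ((PolyG.const _).mul ((PolyG.const _).mul (polyG_trFY _ _)))))
    exact polyG_sandwich _ _ _ _
  rw [integral_finsetSum _ fun i _ => ((q0 i).mul (q1 i)).integrable,
    integral_finsetSum _ fun i _ => (q2 i).integrable]
  refine Finset.sum_congr rfl fun i _ => gauss_ibp _ (q1 i) (q2 i) fun x => ?_
  have h := (deriv_trFY (f := f) (hb f i) a x (EuclideanSpace.single i 1)).fun_mul
    (deriv_trP (f := f) m x (EuclideanSpace.single i 1))
  simp only [zero_smul, add_zero] at h
  exact h

end SD2
end

/-! ### Moments of the translated semicircle law -/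

noncomputable section

/-- The sequence solving `τ 0 = 1`, `τ (a+1) = δ τ a + ∑_{j<a} τ j τ (a-1-j)`: the moments of the
semicircle law on `[-2, 2]` translated by `δ`. -/
def tau (δ : ℝ) : ℕ → ℝ
  | 0 => 1
  | a + 1 => δ * tau δ a + ∑ j : Fin a, tau δ j * tau δ (a - 1 - j)

lemma tau_zero (δ : ℝ) : tau δ 0 = 1 := by rw [tau]

lemma tau_succ (δ : ℝ) (a : ℕ) :
    tau δ (a + 1) = δ * tau δ a + ∑ j ∈ Finset.range a, tau δ j * tau δ (a - 1 - j) := by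
  rw [tau, Finset.sum_range]

lemma tau_nonneg {δ : ℝ} (hδ : 0 ≤ δ) (a : ℕ) : 0 ≤ tau δ a := by
  induction a using Nat.strong_induction_on with
  | _ a ih =>
    match a with
    | 0 => simp [tau_zero]
    | a + 1 =>
      rw [tau_succ]
      have := ih a (by omega)
      refine add_nonneg (mul_nonneg hδ this) (Finset.sum_nonneg fun j hj => ?_)
      have hj := Finset.mem_range.1 hj
      exact mul_nonneg (ih _ (by omega)) (ih _ (by omega))

lemma tau_pred_le {δ : ℝ} (hδ : 0 ≤ δ) (a : ℕ) : δ * tau δ a ≤ tau δ (a + 1) := by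
  rw [tau_succ]
  exact le_add_of_nonneg_right
    (Finset.sum_nonneg fun j _ => mul_nonneg (tau_nonneg hδ _) (tau_nonneg hδ _))

lemma tau_pos {δ : ℝ} (hδ : 0 < δ) (a : ℕ) : 0 < tau δ a := by
  induction a with
  | zero => simp [tau_zero]
  | succ a ih => exact (mul_pos hδ ih).trans_le (tau_pred_le hδ.le a)

/-- The partial sums of the generating function `∑ τ a z ^ a` at `z = 1 / (2 + δ)` stay below the
fixed point `2 + δ` of `B ↦ 1 + δ z B + z² B²`. -/
lemma tau_genfun_le {δ : ℝ} (hδ : 0 ≤ δ) (M : ℕ) :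
    ∑ a ∈ Finset.range M, tau δ a * ((2 + δ)⁻¹) ^ a ≤ 2 + δ := by
  set z := (2 + δ)⁻¹ with hz
  have hz0 : 0 ≤ z := by positivity
  have hτ := tau_nonneg hδ
  induction M with
  | zero => simp; linarith
  | succ M ih =>
    set S := ∑ a ∈ Finset.range M, tau δ a * z ^ a with hS
    have hS0 : 0 ≤ S := Finset.sum_nonneg fun a _ => mul_nonneg (hτ a) (pow_nonneg hz0 a)
    have hconv : ∑ a ∈ Finset.range M, (∑ j ∈ Finset.range a, tau δ j * tau δ (a - 1 - j)) * z ^ (a + 1)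
        ≤ z ^ 2 * (S * S) := by
      have h1 : ∀ a ∈ Finset.range M,
          (∑ j ∈ Finset.range a, tau δ j * tau δ (a - 1 - j)) * z ^ (a + 1) =
          ∑ j ∈ Finset.range a, z ^ 2 * ((tau δ j * z ^ j) * (tau δ (a - 1 - j) * z ^ (a - 1 - j))) := by
        intro a _
        rw [Finset.sum_mul]
        refine Finset.sum_congr rfl fun j hj => ?_
        have hj := Finset.mem_range.1 hj
        have : z ^ (a + 1) = z ^ 2 * (z ^ j * z ^ (a - 1 - j)) := by
          rw [← pow_add, ← pow_add]; congr 1; omega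
        rw [this]; ring
      rw [Finset.sum_congr rfl h1, hS, Finset.sum_mul_sum, ← Finset.sum_product', Finset.mul_sum,
        Finset.sum_sigma']
      let e : (Σ _ : ℕ, ℕ) → ℕ × ℕ := fun p => (p.2, p.1 - 1 - p.2)
      have hinj : Set.InjOn e ((Finset.range M).sigma fun a => Finset.range a) := by
        rintro ⟨a, j⟩ h ⟨b, i⟩ h' hab
        simp only [Finset.coe_sigma, Set.mem_sigma_iff, Finset.coe_range, Set.mem_Iio, e,
          Prod.mk.injEq] at h h' hab
        obtain ⟨rfl, hab⟩ := hab
        obtain rfl : a = b := by omega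
        rfl
      rw [← Finset.sum_image (s := (Finset.range M).sigma fun a => Finset.range a) (g := e)
        (f := fun q => z ^ 2 * ((tau δ q.1 * z ^ q.1) * (tau δ q.2 * z ^ q.2))) hinj]
      refine Finset.sum_le_sum_of_subset_of_nonneg ?_ fun q _ _ => ?_
      · intro q hq
        simp only [Finset.mem_image, Finset.mem_sigma, Finset.mem_range, Finset.mem_product] at hq ⊢
        obtain ⟨p, hp, rfl⟩ := hq
        simp only [e]
        omega
      · have h1 := hτ q.1
        have h2 := hτ q.2
        positivity
    rw [Finset.sum_range_succ']
    have h2 : ∑ a ∈ Finset.range M, tau δ (a + 1) * z ^ (a + 1) =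
        δ * z * S + ∑ a ∈ Finset.range M,
          (∑ j ∈ Finset.range a, tau δ j * tau δ (a - 1 - j)) * z ^ (a + 1) := by
      rw [hS, Finset.mul_sum, ← Finset.sum_add_distrib]
      refine Finset.sum_congr rfl fun a _ => ?_
      rw [tau_succ]; ring
    rw [h2, tau_zero]
    have hzB : z * (2 + δ) = 1 := inv_mul_cancel₀ (by linarith)
    have hzS : z * S ≤ 1 := by rw [← hzB]; gcongr
    have hzS0 : 0 ≤ z * S := by positivity
    nlinarith [mul_le_mul hzS hzS hzS0 zero_le_one]

/-- The semicircle law translated by `δ` is supported in `[-2 + δ, 2 + δ]`, whence the growth rate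
`2 + δ`; read off from `tau_genfun_le`. -/
lemma tau_le {δ : ℝ} (hδ : 0 ≤ δ) (a : ℕ) : tau δ a ≤ (2 + δ) ^ (a + 1) := by
  have h := (Finset.single_le_sum (f := fun a => tau δ a * ((2 + δ)⁻¹) ^ a)
    (fun i _ => mul_nonneg (tau_nonneg hδ i) (by positivity))
    (Finset.mem_range.2 (Nat.lt_succ_self a))).trans (tau_genfun_le hδ (a + 1))
  simp only [inv_pow] at h
  rw [mul_inv_le_iff₀ (by positivity)] at h
  rw [pow_succ]; linarith

lemma tau_even_ge {δ : ℝ} (hδ : 0 ≤ δ) (k : ℕ) : (catalan k : ℝ) ≤ tau δ (2 * k) := by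
  induction k using Nat.strong_induction_on with
  | _ k ih =>
    match k with
    | 0 => simp [tau_zero]
    | k + 1 =>
      rw [show 2 * (k + 1) = (2 * k + 1) + 1 by ring, tau_succ, catalan_succ]
      have h1 : ∑ i : Fin (k + 1), (catalan i * catalan (k - i) : ℝ) ≤
          ∑ j ∈ Finset.range (2 * k + 1), tau δ j * tau δ (2 * k + 1 - 1 - j) := by
        rw [← Finset.sum_range (fun i => (catalan i * catalan (k - i) : ℝ))]
        calc ∑ i ∈ Finset.range (k + 1), (catalan i * catalan (k - i) : ℝ)
            ≤ ∑ i ∈ Finset.range (k + 1), tau δ (2 * i) * tau δ (2 * k + 1 - 1 - 2 * i) := by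
              refine Finset.sum_le_sum fun i hi => ?_
              have hi := Finset.mem_range.1 hi
              rw [show 2 * k + 1 - 1 - 2 * i = 2 * (k - i) by omega]
              exact mul_le_mul (ih i (by omega)) (ih _ (by omega)) (by positivity)
                (tau_nonneg hδ _)
          _ = ∑ j ∈ (Finset.range (k + 1)).image (2 * ·),
                tau δ j * tau δ (2 * k + 1 - 1 - j) := by
              rw [Finset.sum_image]
              intro x _ y _ h
              simpa using h
          _ ≤ _ := by
              refine Finset.sum_le_sum_of_subset_of_nonneg ?_ fun j _ _ =>
                mul_nonneg (tau_nonneg hδ _) (tau_nonneg hδ _)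
              intro j hj
              simp only [Finset.mem_image, Finset.mem_range] at hj ⊢
              omega
      push_cast
      simp only [Nat.add_sub_cancel] at h1
      have := mul_nonneg hδ (tau_nonneg hδ (2 * k + 1))
      linarith

/-- For `δ = 0` the odd terms vanish and the even ones are the Catalan numbers. -/
lemma tau_zero_eq (k : ℕ) : tau 0 (2 * k) = catalan k ∧ tau 0 (2 * k + 1) = 0 := by
  induction k using Nat.strong_induction_on with
  | _ k ih =>
    have hodd : ∀ j, j < 2 * k → j % 2 = 1 → tau 0 j = 0 := by
      intro j hj hj2
      have := (ih (j / 2) (by omega)).2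
      rwa [show 2 * (j / 2) + 1 = j by omega] at this
    have hev : tau 0 (2 * k) = catalan k := by
      match k with
      | 0 => simp [tau_zero]
      | k + 1 =>
        rw [show 2 * (k + 1) = (2 * k + 1) + 1 by ring, tau_succ, catalan_succ, zero_mul, zero_add]
        push_cast
        rw [← Finset.sum_range (fun i => (catalan i * catalan (k - i) : ℝ))]
        have hsub : (Finset.range (k + 1)).image (2 * ·) ⊆ Finset.range (2 * k + 1) := by
          intro j hj
          simp only [Finset.mem_image, Finset.mem_range] at hj ⊢
          omega
        rw [← Finset.sum_subset hsub]
        · rw [Finset.sum_image (by intro x _ y _ h; simpa using h)]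
          refine Finset.sum_congr rfl fun i hi => ?_
          have hi := Finset.mem_range.1 hi
          rw [show 2 * k - 2 * i = 2 * (k - i) by omega, (ih i (by omega)).1,
            (ih (k - i) (by omega)).1]
        · intro j hj hj2
          simp only [Finset.mem_image, Finset.mem_range, not_exists, not_and] at hj hj2
          have : j % 2 = 1 := by
            by_contra h
            exact hj2 (j / 2) (by omega) (by omega)
          rw [hodd j (by omega) this, zero_mul]
    refine ⟨hev, ?_⟩
    rw [tau_succ, zero_mul, zero_add]
    refine Finset.sum_eq_zero fun j hj => ?_
    have hj := Finset.mem_range.1 hj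
    by_cases h : j % 2 = 1
    · rw [hodd j hj h, zero_mul]
    · rw [hodd (2 * k - 1 - j) (by omega) (by omega), mul_zero]

lemma catalan_ge (k : ℕ) : (4 : ℝ) ^ k / (2 * (k + 1) ^ 2) ≤ catalan k := by
  have h1 : ((k + 1) * catalan k : ℝ) = Nat.centralBinom k := by
    exact_mod_cast succ_mul_catalan_eq_centralBinom k
  have h2 : (4 : ℝ) ^ k ≤ 2 * (k + 1) * Nat.centralBinom k := by
    rcases Nat.eq_zero_or_pos k with rfl | hk
    · simp
    · have : (4 : ℝ) ^ k ≤ 2 * k * Nat.centralBinom k := by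
        exact_mod_cast Nat.four_pow_le_two_mul_self_mul_centralBinom k hk
      have h3 : (0 : ℝ) ≤ Nat.centralBinom k := by positivity
      nlinarith
  rw [div_le_iff₀ (by positivity)]
  calc (4 : ℝ) ^ k ≤ 2 * (k + 1) * Nat.centralBinom k := h2
    _ = _ := by rw [← h1]; ring

/-- A lower bound matching the growth `2 ^ a` up to polynomial factors; `δ > 0` is what makes the odd
terms positive. -/
lemma tau_ge {δ : ℝ} (hδ : 0 < δ) (hδ1 : δ ≤ 1) (a : ℕ) :
    δ * 2 ^ a / (4 * (a + 1) ^ 2) ≤ tau δ a := by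
  have key : ∀ k : ℕ, (4 : ℝ) ^ k / (2 * (k + 1) ^ 2) ≤ tau δ (2 * k) := fun k =>
    (catalan_ge k).trans (tau_even_ge hδ.le k)
  obtain ⟨k, rfl | rfl⟩ := Nat.even_or_odd' a
  · refine le_trans ?_ (key k)
    rw [pow_mul, show (2 : ℝ) ^ 2 = 4 by norm_num]
    rw [div_le_div_iff₀ (by positivity) (by positivity)]
    push_cast
    have h1 : δ * (2 * ((k : ℝ) + 1) ^ 2) ≤ 4 * (2 * k + 1) ^ 2 := by
      have hk : (0 : ℝ) ≤ k := by positivity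
      have : (2 * ((k : ℝ) + 1) ^ 2) ≤ 4 * (2 * k + 1) ^ 2 := by nlinarith
      nlinarith [mul_le_mul_of_nonneg_right hδ1 (show 0 ≤ 2 * ((k : ℝ) + 1) ^ 2 by positivity)]
    calc δ * 4 ^ k * (2 * ((k : ℝ) + 1) ^ 2) = 4 ^ k * (δ * (2 * ((k : ℝ) + 1) ^ 2)) := by ring
      _ ≤ _ := by gcongr
  · refine le_trans ?_ ((mul_le_mul_of_nonneg_left (key k) hδ.le).trans (tau_pred_le hδ.le (2 * k)))
    rw [pow_succ, pow_mul, show (2 : ℝ) ^ 2 = 4 by norm_num, mul_div_assoc]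
    gcongr δ * ?_
    rw [div_le_div_iff₀ (by positivity) (by positivity)]
    push_cast
    have h1 : 2 * (2 * ((k : ℝ) + 1) ^ 2) ≤ 4 * (2 * k + 1 + 1) ^ 2 := by
      have hk : (0 : ℝ) ≤ k := by positivity
      nlinarith
    calc 4 ^ k * 2 * (2 * ((k : ℝ) + 1) ^ 2) = 4 ^ k * (2 * (2 * ((k : ℝ) + 1) ^ 2)) := by ring
      _ ≤ _ := by gcongr

/-- `τ (a + b - 1)` is at most `G τ a τ b`, with `G` as in the conclusion, on the range `a + b ≤ D`. -/
lemma tau_submul {δ : ℝ} (hδ : 0 < δ) (hδ1 : δ ≤ 1) {D a b : ℕ} (hab : a + b ≤ D) (hb : 1 ≤ b) :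
    tau δ (a + b - 1) ≤
      (16 * (D + 1) ^ 4 * Real.exp (δ * D / 2) / δ ^ 2) * (tau δ a * tau δ b) := by
  have h1 : tau δ (a + b - 1) ≤ 2 ^ (a + b) * Real.exp (δ * D / 2) := by
    refine (tau_le hδ.le _).trans ?_
    rw [show a + b - 1 + 1 = a + b by omega, show 2 + δ = 2 * (1 + δ / 2) by ring, mul_pow]
    gcongr
    calc (1 + δ / 2) ^ (a + b) ≤ Real.exp (δ / 2) ^ (a + b) := by
          gcongr; linarith [Real.add_one_le_exp (δ / 2)]
      _ = Real.exp (δ * ((a + b : ℕ) : ℝ) / 2) := by rw [← Real.exp_nat_mul]; congr 1; ring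
      _ ≤ _ := by
          apply Real.exp_le_exp.2
          have : ((a + b : ℕ) : ℝ) ≤ D := by exact_mod_cast hab
          nlinarith
  have hl : ∀ c ≤ D, δ * 2 ^ c / (4 * ((D : ℝ) + 1) ^ 2) ≤ tau δ c := by
    intro c hc
    refine le_trans ?_ (tau_ge hδ hδ1 c)
    have : (c : ℝ) ≤ D := by exact_mod_cast hc
    gcongr
  have h2 := mul_le_mul (hl a (by omega)) (hl b (by omega)) (by positivity) (tau_nonneg hδ.le a)
  calc tau δ (a + b - 1) ≤ 2 ^ (a + b) * Real.exp (δ * D / 2) := h1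
    _ = (16 * (D + 1) ^ 4 * Real.exp (δ * D / 2) / δ ^ 2) *
        ((δ * 2 ^ a / (4 * ((D : ℝ) + 1) ^ 2)) * (δ * 2 ^ b / (4 * ((D : ℝ) + 1) ^ 2))) := by
        field_simp; ring
    _ ≤ _ := by gcongr

end

/-! ### Bounds and limits for mixed trace moments -/

noncomputable section
section
variable {n N : ℕ} {f : EuclideanSpace ℝ (Fin N) →ₗ[ℝ] Matrix (Fin n) (Fin n) ℂ}

lemma trN_zero (hn : 0 < n) (x : EuclideanSpace ℝ (Fin N)) : trN f 0 x = 1 := by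
  have : (n : ℂ) ≠ 0 := by exact_mod_cast hn.ne'
  simp [trN, this]

lemma mom_zero : mom f 0 = 1 := by simp [mom, trP]

lemma mom_cons_zero (hn : 0 < n) (m : Multiset ℕ) : mom f (0 ::ₘ m) = mom f m := by
  simp [mom, trP_cons, trN_zero hn]

lemma mom_cons_one (hn : 0 < n) (hf : IsHermParam f) (m : Multiset ℕ) : mom f (1 ::ₘ m) = 0 := by
  rw [show (1 : ℕ) = 0 + 1 from rfl, schwinger_dyson hn hf]
  simp [mom_cons_zero hn]

/-- Terms on the right of the Schwinger–Dyson equation have smaller complexity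
`m.sum + m.card` than the left side. -/
lemma mset_induction {P : Multiset ℕ → Prop} (h0 : P 0) (hz : ∀ m, P m → P (0 ::ₘ m))
    (hs : ∀ a m, (∀ m' : Multiset ℕ, m'.sum ≤ a + m.sum →
      m'.sum + m'.card < a + m.sum + m.card + 2 → P m') → P ((a + 1) ::ₘ m)) (m : Multiset ℕ) :
    P m := by
  induction h : m.sum + m.card using Nat.strong_induction_on generalizing m with
  | _ k ih =>
    induction m using Multiset.induction_on with
    | empty => exact h0
    | cons b m _ =>
      simp only [Multiset.sum_cons, Multiset.card_cons] at h
      match b with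
      | 0 => exact hz m (ih (m.sum + m.card) (by omega) m rfl)
      | a + 1 => exact hs a m fun mm _ hm => ih _ (by omega) mm rfl

/-- The mixed moments are dominated by products of `tau δ`: once `n ^ 2` is large compared with
`G D / δ`, the term `δ * tau δ a` in the recursion for `tau` absorbs the `n⁻²` corrections of the
Schwinger–Dyson equation. -/
lemma mom_bound (hn : 0 < n) (hf : IsHermParam f) {δ G : ℝ} {D : ℕ} (hδ : 0 < δ)
    (hG : ∀ a b, a + b ≤ D → 1 ≤ b → tau δ (a + b - 1) ≤ G * (tau δ a * tau δ b))
    (hG1 : 1 / δ ≤ G) (hD : 2 * G * D ≤ δ * n ^ 2) (m : Multiset ℕ) (hm : m.sum ≤ D) :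
    ‖mom f m‖ ≤ (m.map (tau δ)).prod := by
  have hn' : (0 : ℝ) < (n : ℝ) ^ 2 := by positivity
  have hτ := tau_nonneg hδ.le
  have hG0 : 0 < G := lt_of_lt_of_le (by positivity) hG1
  have hpred : ∀ b, 1 ≤ b → tau δ (b - 1) ≤ G * tau δ b := by
    intro b hb
    have h := tau_pred_le hδ.le (b - 1)
    rw [Nat.sub_add_cancel hb] at h
    calc tau δ (b - 1) = 1 / δ * (δ * tau δ (b - 1)) := by field_simp
      _ ≤ 1 / δ * tau δ b := by gcongr
      _ ≤ _ := by gcongr; exact hτ b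
  have hP : ∀ m : Multiset ℕ, 0 ≤ (m.map (tau δ)).prod := by
    intro m
    refine Multiset.prod_nonneg fun x hx => ?_
    obtain ⟨a, -, rfl⟩ := Multiset.mem_map.1 hx
    exact hτ a
  induction m using mset_induction with
  | h0 => simp [mom_zero]
  | hz m ih =>
    rw [mom_cons_zero hn]
    simpa [tau_zero] using ih (by simpa using hm)
  | hs a m ih =>
    simp only [Multiset.sum_cons] at hm
    set P := (m.map (tau δ)).prod with hPdef
    rw [schwinger_dyson hn hf, Multiset.map_cons, Multiset.prod_cons, tau_succ]
    have e1 : ‖∑ j ∈ Finset.range a, mom f (j ::ₘ (a - 1 - j) ::ₘ m)‖ ≤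
        (∑ j ∈ Finset.range a, tau δ j * tau δ (a - 1 - j)) * P := by
      rw [Finset.sum_mul]
      refine norm_sum_le_of_le _ fun j hj => ?_
      have hj := Finset.mem_range.1 hj
      have := ih (j ::ₘ (a - 1 - j) ::ₘ m)
        (by simp only [Multiset.sum_cons]; omega)
        (by simp only [Multiset.sum_cons, Multiset.card_cons]; omega)
        (by simp only [Multiset.sum_cons]; omega)
      simpa [mul_assoc] using this
    have e2 : ‖(a : ℂ) / n ^ 2 * mom f ((a - 1) ::ₘ m)‖ ≤ (a * G * tau δ a * P) / n ^ 2 := by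
      rw [norm_mul, norm_div, norm_pow, Complex.norm_natCast, Complex.norm_natCast, div_mul_eq_mul_div]
      rcases Nat.eq_zero_or_pos a with rfl | ha
      · simp
      refine div_le_div_of_nonneg_right ?_ hn'.le
      have := ih ((a - 1) ::ₘ m)
        (by simp only [Multiset.sum_cons]; omega)
        (by simp only [Multiset.sum_cons, Multiset.card_cons]; omega)
        (by simp only [Multiset.sum_cons]; omega)
      rw [Multiset.map_cons, Multiset.prod_cons] at this
      calc (a : ℝ) * ‖mom f ((a - 1) ::ₘ m)‖ ≤ a * (tau δ (a - 1) * P) := by gcongr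
        _ ≤ a * (G * tau δ a * P) := by gcongr; exacts [hP m, hpred a ha]
        _ = _ := by ring
    have e3 : ‖(m.map fun b : ℕ => (b : ℂ) * (mom f ((a + b - 1) ::ₘ m.erase b) -
        mom f (a ::ₘ (b - 1) ::ₘ m.erase b))).sum‖ ≤ m.sum * (2 * G * tau δ a * P) := by
      refine (norm_multiset_sum_le _).trans ?_
      rw [Multiset.map_map, Nat.cast_multiset_sum, ← Multiset.sum_map_mul_right]
      refine Multiset.sum_map_le_sum_map _ _ fun b hb => ?_
      simp only [Function.comp, norm_mul, Complex.norm_natCast]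
      rcases Nat.eq_zero_or_pos b with rfl | hb0
      · simp
      gcongr
      have hsum : b + (m.erase b).sum = m.sum := by
        rw [← Multiset.sum_cons, Multiset.cons_erase hb]
      have hcard : (m.erase b).card + 1 = m.card := by
        rw [← Multiset.card_cons b, Multiset.cons_erase hb]
      have hprod : tau δ b * ((m.erase b).map (tau δ)).prod = P :=
        Multiset.prod_map_erase hb
      set E := ((m.erase b).map (tau δ)).prod with hE
      have hE0 : 0 ≤ E := hP _
      have t1 := ih ((a + b - 1) ::ₘ m.erase b)
        (by simp only [Multiset.sum_cons]; omega)
        (by simp only [Multiset.sum_cons, Multiset.card_cons]; omega)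
        (by simp only [Multiset.sum_cons]; omega)
      have t2 := ih (a ::ₘ (b - 1) ::ₘ m.erase b)
        (by simp only [Multiset.sum_cons]; omega)
        (by simp only [Multiset.sum_cons, Multiset.card_cons]; omega)
        (by simp only [Multiset.sum_cons]; omega)
      simp only [Multiset.map_cons, Multiset.prod_cons] at t1 t2
      have t1' : tau δ (a + b - 1) * E ≤ G * (tau δ a * tau δ b) * E := by
        gcongr; exact hG a b (by omega) hb0
      have t2' : tau δ a * (tau δ (b - 1) * E) ≤ tau δ a * (G * tau δ b * E) := by
        have := hτ a
        gcongr; exact hpred b hb0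
      refine (norm_sub_le _ _).trans ?_
      rw [← hprod]
      linarith
    have e3' : ‖((n : ℂ) ^ 2)⁻¹ * (m.map fun b : ℕ => (b : ℂ) * (mom f ((a + b - 1) ::ₘ m.erase b) -
        mom f (a ::ₘ (b - 1) ::ₘ m.erase b))).sum‖ ≤ m.sum * (2 * G * tau δ a * P) / n ^ 2 := by
      rw [norm_mul, norm_inv, norm_pow, Complex.norm_natCast, inv_mul_eq_div]
      gcongr
    have e4 : (a * G * tau δ a * P) / n ^ 2 + m.sum * (2 * G * tau δ a * P) / n ^ 2 ≤
        δ * tau δ a * P := by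
      rw [← add_div, div_le_iff₀ hn']
      have hQ : 0 ≤ tau δ a * P := mul_nonneg (hτ a) (hP m)
      have hmD : (a : ℝ) + m.sum ≤ D := by
        have : a + m.sum ≤ D := by omega
        exact_mod_cast this
      have ha0 : (0 : ℝ) ≤ a := by positivity
      have h1 : (a * G + m.sum * (2 * G) : ℝ) ≤ 2 * G * D := by nlinarith
      calc (a * G * tau δ a * P + m.sum * (2 * G * tau δ a * P) : ℝ)
          = (a * G + m.sum * (2 * G)) * (tau δ a * P) := by ring
        _ ≤ (δ * n ^ 2) * (tau δ a * P) := by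
            exact mul_le_mul_of_nonneg_right (h1.trans hD) hQ
        _ = _ := by ring
    refine (norm_add_le _ _).trans ((add_le_add_left (norm_sub_le _ _) _).trans ?_)
    linarith
end

/-- At fixed order the `n⁻²` terms of the Schwinger–Dyson equation vanish in the limit, which leaves the
recursion solved by the products of the semicircle moments `tau 0`. -/
lemma mom_tendsto
    (f : ∀ n : ℕ, EuclideanSpace ℝ (Fin (n ^ 2 - 1)) →ₗ[ℝ] Matrix (Fin n) (Fin n) ℂ)
    (hf : ∀ n, IsHermParam (f n)) (m : Multiset ℕ) :
    Filter.Tendsto (fun n => mom (f n) m) Filter.atTop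
      (nhds ((m.map fun a => (tau 0 a : ℂ)).prod)) := by
  induction m using mset_induction with
  | h0 => simp [mom_zero]
  | hz m ih =>
    simp only [Multiset.map_cons, Multiset.prod_cons, tau_zero, Complex.ofReal_one, one_mul]
    refine ih.congr' ?_
    filter_upwards [Filter.eventually_gt_atTop 0] with n hn
    rw [mom_cons_zero hn]
  | hs a m ih =>
    have hinv : Filter.Tendsto (fun n : ℕ => ((n : ℂ) ^ 2)⁻¹) Filter.atTop (nhds 0) := by
      have := (tendsto_inv_atTop_nhds_zero_nat (𝕜 := ℂ)).pow 2
      simpa using this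
    have h1 : Filter.Tendsto (fun n => ∑ j ∈ Finset.range a, mom (f n) (j ::ₘ (a - 1 - j) ::ₘ m))
        Filter.atTop (nhds (∑ j ∈ Finset.range a, ((tau 0 j : ℂ) * ((tau 0 (a - 1 - j) : ℂ) *
          (m.map fun a => (tau 0 a : ℂ)).prod)))) := by
      refine tendsto_finsetSum _ fun j hj => ?_
      have hj := Finset.mem_range.1 hj
      have := ih (j ::ₘ (a - 1 - j) ::ₘ m)
        (by simp only [Multiset.sum_cons]; omega)
        (by simp only [Multiset.sum_cons, Multiset.card_cons]; omega)
      simpa using this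
    have h2 : Filter.Tendsto (fun n : ℕ => (a : ℂ) / n ^ 2 * mom (f n) ((a - 1) ::ₘ m))
        Filter.atTop (nhds 0) := by
      have := (hinv.const_mul (a : ℂ)).mul (ih ((a - 1) ::ₘ m)
        (by simp only [Multiset.sum_cons]; omega)
        (by simp only [Multiset.sum_cons, Multiset.card_cons]; omega))
      simpa [div_eq_mul_inv] using this
    have h3 : Filter.Tendsto (fun n : ℕ => ((n : ℂ) ^ 2)⁻¹ * (m.map fun b : ℕ =>
        (b : ℂ) * (mom (f n) ((a + b - 1) ::ₘ m.erase b) -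
          mom (f n) (a ::ₘ (b - 1) ::ₘ m.erase b))).sum) Filter.atTop (nhds 0) := by
      have := hinv.mul (tendsto_multiset_sum
        (f := fun (b : ℕ) (n : ℕ) => (b : ℂ) * (mom (f n) ((a + b - 1) ::ₘ m.erase b) -
          mom (f n) (a ::ₘ (b - 1) ::ₘ m.erase b)))
        (a := fun b => (b : ℂ) * ((((a + b - 1) ::ₘ m.erase b).map fun a => (tau 0 a : ℂ)).prod -
          ((a ::ₘ (b - 1) ::ₘ m.erase b).map fun a => (tau 0 a : ℂ)).prod))
        (x := Filter.atTop) m fun b hb => ?_)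
      · simpa using this
      have hsum : b + (m.erase b).sum = m.sum := by
        rw [← Multiset.sum_cons, Multiset.cons_erase hb]
      have hcard : (m.erase b).card + 1 = m.card := by
        rw [← Multiset.card_cons b, Multiset.cons_erase hb]
      refine Filter.Tendsto.const_mul _ (Filter.Tendsto.sub (ih _ ?_ ?_) (ih _ ?_ ?_)) <;>
      · simp only [Multiset.sum_cons, Multiset.card_cons]; omega
    have := (h1.sub h2).add h3
    have hlim : (((a + 1) ::ₘ m).map fun a => (tau 0 a : ℂ)).prod =
        (∑ j ∈ Finset.range a, ((tau 0 j : ℂ) * ((tau 0 (a - 1 - j) : ℂ) *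
          (m.map fun a => (tau 0 a : ℂ)).prod))) - 0 + 0 := by
      rw [Multiset.map_cons, Multiset.prod_cons, tau_succ]
      push_cast
      rw [sub_zero, add_zero, zero_mul, zero_add, Finset.sum_mul]
      simp only [mul_assoc]
    rw [hlim]
    refine this.congr' ?_
    filter_upwards [Filter.eventually_gt_atTop 0] with n hn
    rw [schwinger_dyson hn (hf n)]

end

noncomputable section

/-- Moments of order `2 s ⌈log n⌉` still grow at most like powers of `2 + 1 / s`. -/
lemma even_mom_bound {s : ℕ} (hs : 1 ≤ s) :
    ∀ᶠ n : ℕ in Filter.atTop, ∀ (N : ℕ)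
      (f : EuclideanSpace ℝ (Fin N) →ₗ[ℝ] Matrix (Fin n) (Fin n) ℂ), IsHermParam f →
      ‖mom f {2 * (s * ⌈Real.log n⌉₊)}‖ ≤ (2 + 1 / (s : ℝ)) ^ (2 * (s * ⌈Real.log n⌉₊) + 1) := by
  have hs' : (1 : ℝ) ≤ s := by exact_mod_cast hs
  have hlo := (Real.isLittleO_pow_log_id_atTop (n := 5)).bound
    (c := (32 * Real.exp 1 * s ^ 3 * (4 * s + 1) ^ 5)⁻¹) (by positivity)
  have h1 := tendsto_natCast_atTop_atTop (R := ℝ) |>.eventually hlo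
  have h2 := (Real.tendsto_log_atTop.comp (tendsto_natCast_atTop_atTop (R := ℝ))).eventually_ge_atTop 1
  filter_upwards [h1, h2, Filter.eventually_gt_atTop 0] with n h1 h2 hn N f hf
  simp only [Function.comp] at h2
  have hn' : (0 : ℝ) < n := by exact_mod_cast hn
  set l := Real.log n with hl
  set L := ⌈l⌉₊ with hL
  set δ : ℝ := 1 / s with hδ
  set D := 2 * (s * L) with hD
  have hδ0 : 0 < δ := by positivity
  have hδ1 : δ ≤ 1 := by rw [hδ, div_le_one (by positivity)]; exact hs'
  have hLl : (L : ℝ) ≤ l + 1 := (Nat.ceil_lt_add_one (by linarith)).le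
  have hexp : δ * D / 2 = L := by rw [hδ, hD]; push_cast; field_simp
  have hDl : (D : ℝ) + 1 ≤ (4 * s + 1) * l := by
    have : (D : ℝ) = 2 * (s * L) := by rw [hD]; push_cast; ring
    rw [this]; nlinarith
  have heL : Real.exp L ≤ Real.exp 1 * n := by
    calc Real.exp L ≤ Real.exp (l + 1) := Real.exp_le_exp.2 hLl
      _ = _ := by rw [Real.exp_add, hl, Real.exp_log hn', mul_comm]
  have h1' : 32 * Real.exp 1 * s ^ 3 * ((4 * s + 1) * l) ^ 5 ≤ n := by
    rw [Real.norm_of_nonneg (by positivity), id, Real.norm_of_nonneg hn'.le,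
      le_inv_mul_iff₀ (by positivity)] at h1
    calc _ = 32 * Real.exp 1 * s ^ 3 * (4 * s + 1) ^ 5 * l ^ 5 := by ring
      _ ≤ _ := h1
  have hmain : 2 * (16 * (D + 1) ^ 4 * Real.exp (δ * D / 2) / δ ^ 2) * D ≤ δ * n ^ 2 := by
    rw [hexp]
    have hδs : δ * s = 1 := by rw [hδ]; field_simp
    have hDD : (D + 1 : ℝ) ^ 4 * D ≤ ((4 * s + 1) * l) ^ 5 := by
      calc (D + 1 : ℝ) ^ 4 * D ≤ (D + 1 : ℝ) ^ 4 * (D + 1) := by gcongr; linarith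
        _ = (D + 1 : ℝ) ^ 5 := by ring
        _ ≤ _ := by gcongr
    have : 32 * ((D + 1 : ℝ) ^ 4 * D) * Real.exp L * s ^ 3 ≤ n ^ 2 := by
      calc 32 * ((D + 1 : ℝ) ^ 4 * D) * Real.exp L * s ^ 3
          ≤ 32 * (((4 * s + 1) * l) ^ 5) * (Real.exp 1 * n) * s ^ 3 := by gcongr
        _ = (32 * Real.exp 1 * s ^ 3 * ((4 * s + 1) * l) ^ 5) * n := by ring
        _ ≤ n * n := by gcongr
        _ = _ := by ring
    have e : 2 * (16 * (D + 1 : ℝ) ^ 4 * Real.exp L / δ ^ 2) * D =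
        δ * (32 * ((D + 1 : ℝ) ^ 4 * D) * Real.exp L * s ^ 3) := by
      rw [hδ]; field_simp; ring
    rw [e]; gcongr
  have hG1 : 1 / δ ≤ 16 * (D + 1) ^ 4 * Real.exp (δ * D / 2) / δ ^ 2 := by
    have a1 : (1 : ℝ) ≤ (D + 1) ^ 4 := one_le_pow₀ (by linarith [show (0 : ℝ) ≤ D by positivity])
    have a2 : (1 : ℝ) ≤ Real.exp (δ * D / 2) := Real.one_le_exp (by positivity)
    have a3 : (1 : ℝ) ≤ 16 * (D + 1) ^ 4 * Real.exp (δ * D / 2) := by nlinarith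
    rw [div_le_div_iff₀ hδ0 (by positivity)]
    nlinarith
  have := mom_bound hn hf hδ0 (fun a b hab hb => tau_submul hδ0 hδ1 hab hb) hG1 hmain {D}
    (by simp)
  simp only [Multiset.map_singleton, Multiset.prod_singleton] at this
  exact this.trans (tau_le hδ0.le D)

end

/-! ### The support function of the density matrices -/

noncomputable section
section
variable {n N : ℕ} {f : EuclideanSpace ℝ (Fin N) →ₗ[ℝ] Matrix (Fin n) (Fin n) ℂ}

/-- Traces against powers of a Hermitian matrix, in an eigenbasis. -/
lemma trace_pow_mul {A : Matrix (Fin n) (Fin n) ℂ} (hA : A.IsHermitian)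
    (B : Matrix (Fin n) (Fin n) ℂ) (k : ℕ) :
    (A ^ k * B).trace = ∑ i, (hA.eigenvalues i : ℂ) ^ k *
      ((hA.eigenvectorUnitary : Matrix (Fin n) (Fin n) ℂ).conjTranspose * B *
        (hA.eigenvectorUnitary : Matrix (Fin n) (Fin n) ℂ)) i i := by
  set U := (hA.eigenvectorUnitary : Matrix (Fin n) (Fin n) ℂ) with hU
  have h : A ^ k = U * Matrix.diagonal (fun i => (hA.eigenvalues i : ℂ) ^ k) * U.conjTranspose := by
    conv_lhs => rw [hA.spectral_theorem, ← map_pow, Matrix.diagonal_pow]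
    rw [Unitary.conjStarAlgAut_apply]
    rfl
  rw [h, mul_assoc, mul_assoc, Matrix.trace_mul_comm, mul_assoc, Matrix.trace]
  refine Finset.sum_congr rfl fun i _ => ?_
  rw [Matrix.diag_apply, Matrix.diagonal_mul]

/-- Even powers of an expectation value `Tr (A ρ)` are at most the trace of that power of `A`,
by Jensen's inequality in an eigenbasis. -/
lemma trace_pow_le {A ρ : Matrix (Fin n) (Fin n) ℂ} (hA : A.IsHermitian)
    (hρ : ρ ∈ densityMatrices (Fin n)) (K : ℕ) :
    ((A * ρ).trace.re) ^ (2 * K) ≤ (A ^ (2 * K)).trace.re := by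
  set U := (hA.eigenvectorUnitary : Matrix (Fin n) (Fin n) ℂ) with hU
  set p : Fin n → ℝ := fun i => ((U.conjTranspose * ρ * U) i i).re with hp
  have hpsd : (U.conjTranspose * ρ * U).PosSemidef := hρ.1.conjTranspose_mul_mul_same U
  have hpc : ∀ i, (U.conjTranspose * ρ * U) i i = (p i : ℂ) := fun i => by
    have := Complex.le_def.1 (hpsd.diag_nonneg (i := i))
    refine Complex.ext rfl ?_
    simpa using this.2.symm
  have hp0 : ∀ i, 0 ≤ p i := fun i => (Complex.le_def.1 (hpsd.diag_nonneg (i := i))).1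
  have h0 := trace_pow_mul hA ρ 0
  have h1 := trace_pow_mul hA ρ 1
  have h2 := trace_pow_mul hA 1 (2 * K)
  have hUU : U.conjTranspose * U = 1 := Unitary.coe_star_mul_self _
  rw [mul_one, mul_one, ← hU, hUU] at h2
  simp only [← hU, hpc, pow_zero, one_mul, pow_one, Matrix.one_apply_eq, mul_one] at h0 h1 h2
  rw [hρ.2] at h0
  have hsum : ∑ i, p i = 1 := by exact_mod_cast h0.symm
  have h1' : (A * ρ).trace.re = ∑ i, p i * hA.eigenvalues i := by
    rw [h1]; simp [mul_comm]
  have h2' : (A ^ (2 * K)).trace.re = ∑ i, hA.eigenvalues i ^ (2 * K) := by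
    rw [h2, Complex.re_sum]
    refine Finset.sum_congr rfl fun i _ => ?_
    rw [← Complex.ofReal_pow, Complex.ofReal_re]
  rw [h1', h2']
  refine (Real.pow_arith_mean_le_arith_mean_pow_of_even Finset.univ p hA.eigenvalues
    (fun i _ => hp0 i) hsum (even_two_mul K)).trans (Finset.sum_le_sum fun i _ => ?_)
  have hle : p i ≤ 1 := hsum ▸ Finset.single_le_sum (fun j _ => hp0 j) (Finset.mem_univ i)
  have : 0 ≤ hA.eigenvalues i ^ (2 * K) := (even_two_mul K).pow_nonneg _
  exact mul_le_of_le_one_left this hle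

/-- The support function of the set of density matrices, as a function on the parameter space. -/
def suppF (f : EuclideanSpace ℝ (Fin N) →ₗ[ℝ] Matrix (Fin n) (Fin n) ℂ)
    (x : EuclideanSpace ℝ (Fin N)) : ℝ :=
  sSup ((fun M => ((f x * M).trace).re) '' densityMatrices (Fin n))

lemma trace_abs_le (hf : IsHermParam f) (x : EuclideanSpace ℝ (Fin N))
    {ρ : Matrix (Fin n) (Fin n) ℂ} (hρ : ρ ∈ densityMatrices (Fin n)) :
    |(f x * ρ).trace.re| ≤ ‖x‖ := by
  have h := trace_pow_le (hf.herm x) hρ 1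
  rw [mul_one, pow_two (f x), hf.inner_eq, real_inner_self_eq_norm_sq] at h
  exact abs_le_of_sq_le_sq h (norm_nonneg x)

lemma bddAbove_supp (hf : IsHermParam f) (x : EuclideanSpace ℝ (Fin N)) :
    BddAbove ((fun M => ((f x * M).trace).re) '' densityMatrices (Fin n)) := by
  refine ⟨‖x‖, ?_⟩
  rintro _ ⟨ρ, hρ, rfl⟩
  exact (le_abs_self _).trans (trace_abs_le hf x hρ)

lemma maxMixed_mem (hn : 0 < n) : maxMixed (Fin n) ∈ densityMatrices (Fin n) := by
  have hn' : (n : ℂ) ≠ 0 := by exact_mod_cast hn.ne'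
  refine ⟨Matrix.PosSemidef.one.smul ?_, ?_⟩
  · rw [Fintype.card_fin, inv_nonneg]; exact Nat.cast_nonneg n
  · simp [maxMixed, hn']

lemma supp_ge (hf : IsHermParam f) (x : EuclideanSpace ℝ (Fin N))
    {ρ : Matrix (Fin n) (Fin n) ℂ} (hρ : ρ ∈ densityMatrices (Fin n)) :
    (f x * ρ).trace.re ≤ suppF f x := le_csSup (bddAbove_supp hf x) ⟨ρ, hρ, rfl⟩

lemma supp_le (hn : 0 < n) {x : EuclideanSpace ℝ (Fin N)} {c : ℝ}
    (h : ∀ ρ ∈ densityMatrices (Fin n), (f x * ρ).trace.re ≤ c) : suppF f x ≤ c := by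
  refine csSup_le ⟨_, _, maxMixed_mem hn, rfl⟩ ?_
  rintro _ ⟨ρ, hρ, rfl⟩
  exact h ρ hρ

lemma supp_nonneg (hn : 0 < n) (hf : IsHermParam f) (x : EuclideanSpace ℝ (Fin N)) :
    0 ≤ suppF f x := by
  refine le_trans ?_ (supp_ge hf x (maxMixed_mem hn))
  simp [maxMixed, hf.traceless]

lemma supp_le_norm (hn : 0 < n) (hf : IsHermParam f) (x : EuclideanSpace ℝ (Fin N)) :
    suppF f x ≤ ‖x‖ :=
  supp_le hn fun _ hρ => (le_abs_self _).trans (trace_abs_le hf x hρ)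

lemma supp_continuous (hn : 0 < n) (hf : IsHermParam f) : Continuous (suppF f) := by
  refine (LipschitzWith.of_le_add fun x y => ?_ : LipschitzWith 1 (suppF f)).continuous
  refine supp_le hn fun ρ hρ => ?_
  have h1 := supp_ge hf y hρ
  have h2 := (le_abs_self _).trans (trace_abs_le hf (x - y) hρ)
  rw [map_sub, sub_mul, Matrix.trace_sub, Complex.sub_re] at h2
  rw [dist_eq_norm]
  linarith

lemma supp_smul (x : EuclideanSpace ℝ (Fin N)) {c : ℝ} (hc : 0 ≤ c) :
    suppF f (c • x) = c * suppF f x := by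
  rw [suppF, suppF, ← smul_eq_mul, ← Real.sSup_smul_of_nonneg hc, ← Set.image_smul, Set.image_image]
  congr 1
  refine Set.image_congr fun ρ _ => ?_
  simp

lemma polyG_supp (hn : 0 < n) (hf : IsHermParam f) : PolyG (suppF f) := by
  refine PolyG.norm_id.of_le (supp_continuous hn hf) fun x => ?_
  rw [Real.norm_of_nonneg (supp_nonneg hn hf x), norm_norm]
  exact supp_le_norm hn hf x

lemma supp_pow_le (hn : 0 < n) (hf : IsHermParam f) (x : EuclideanSpace ℝ (Fin N)) {K : ℕ}
    (hK : 1 ≤ K) : suppF f x ^ (2 * K) ≤ (f x ^ (2 * K)).trace.re := by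
  set T := (f x ^ (2 * K)).trace.re with hT
  have hT0 : 0 ≤ T :=
    ((even_two_mul K).pow_nonneg _).trans (trace_pow_le (hf.herm x) (maxMixed_mem hn) K)
  have hne : 2 * K ≠ 0 := by omega
  have h : suppF f x ≤ T ^ (((2 * K : ℕ) : ℝ)⁻¹) := by
    refine supp_le hn fun ρ hρ => le_of_not_gt fun hlt => ?_
    have h1 := pow_lt_pow_left₀ hlt (by positivity) hne
    rw [Real.rpow_inv_natCast_pow hT0 hne] at h1
    exact absurd (trace_pow_le (hf.herm x) hρ K) (not_le.2 h1)
  calc suppF f x ^ (2 * K) ≤ (T ^ (((2 * K : ℕ) : ℝ)⁻¹)) ^ (2 * K) :=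
        pow_le_pow_left₀ (supp_nonneg hn hf x) h _
    _ = T := Real.rpow_inv_natCast_pow hT0 hne

/-- Homogeneous form of the definition of the support function, valid for unnormalized states. -/
lemma trace_psd_le (hf : IsHermParam f) (x : EuclideanSpace ℝ (Fin N))
    {Q : Matrix (Fin n) (Fin n) ℂ} (hQ : Q.PosSemidef) :
    (f x * Q).trace.re ≤ suppF f x * Q.trace.re := by
  have h0 := Complex.le_def.1 hQ.trace_nonneg
  have hc : Q.trace = (Q.trace.re : ℂ) := Complex.ext rfl (by simpa using h0.2.symm)
  by_cases h : Q.trace.re = 0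
  · rw [h, Complex.ofReal_zero, hQ.trace_eq_zero_iff] at hc
    simp [hc]
  set T := Q.trace.re with hT
  have hT0 : 0 < T := lt_of_le_of_ne h0.1 (Ne.symm h)
  have hTc : (T : ℂ) ≠ 0 := by exact_mod_cast h
  have hmem : ((T : ℂ)⁻¹) • Q ∈ densityMatrices (Fin n) := by
    refine ⟨hQ.smul ?_, ?_⟩
    · rw [inv_nonneg]; exact_mod_cast hT0.le
    · rw [Matrix.trace_smul, hc, smul_eq_mul, inv_mul_cancel₀ hTc]
  have := supp_ge hf x hmem
  rw [mul_smul_comm, Matrix.trace_smul, smul_eq_mul, ← Complex.ofReal_inv, Complex.re_ofReal_mul,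
    inv_mul_le_iff₀ hT0] at this
  linarith

lemma scaled_herm (hf : IsHermParam f) (x : EuclideanSpace ℝ (Fin N)) :
    (scaled f x).IsHermitian := by
  have := hf.herm x
  rw [scaled, Matrix.IsHermitian, Matrix.conjTranspose_smul, this.eq]
  simp

/-- The support function at the test state proportional to `p(Y)²` with `p(y) = y^k (2 + y)` and
`Y = scaled f x`; for large `k` this state concentrates near the top of the spectrum. -/
lemma test_state (hn : 0 < n) (hf : IsHermParam f) (x : EuclideanSpace ℝ (Fin N)) (k : ℕ) :
    (4 * trN f (2 * k + 1) x + 4 * trN f (2 * k + 2) x + trN f (2 * k + 3) x).re ≤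
      suppF f x / √n * (4 * trN f (2 * k) x + 4 * trN f (2 * k + 1) x + trN f (2 * k + 2) x).re := by
  have hn' : (0 : ℝ) < n := by exact_mod_cast hn
  set Y := scaled f x with hY
  have hYh : Y.IsHermitian := scaled_herm hf x
  set P := 2 * Y ^ k + Y ^ (k + 1) with hP
  have hPh : P.IsHermitian := by
    have h2 : (2 * Y ^ k) = Y ^ k + Y ^ k := two_mul _
    rw [hP, h2]
    exact ((hYh.pow k).add (hYh.pow k)).add (hYh.pow (k + 1))
  have hQ : (P * P).PosSemidef := by
    have := Matrix.posSemidef_conjTranspose_mul_self P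
    rwa [hPh.eq] at this
  have e : P * P = 4 * Y ^ (2 * k) + 4 * Y ^ (2 * k + 1) + Y ^ (2 * k + 2) := by
    have h2 : ∀ M : Matrix (Fin n) (Fin n) ℂ, 2 * M = M + M := two_mul
    have h4 : ∀ M : Matrix (Fin n) (Fin n) ℂ, 4 * M = M + M + M + M := fun M => by
      rw [show (4 : Matrix (Fin n) (Fin n) ℂ) = 1 + 1 + 1 + 1 by norm_num]; simp only [add_mul, one_mul]
    have ha : 2 * k + 1 = k + (k + 1) := by ring
    have hb : 2 * k + 2 = (k + 1) + (k + 1) := by ring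
    rw [hP, h4, h4, h2, hb, ha, two_mul k]
    simp only [add_mul, mul_add, ← pow_add]
    rw [show k + 1 + k = k + (k + 1) by ring]
    abel
  have hX : f x = ((√n : ℝ) : ℂ) • Y := by
    have : ((√n : ℝ) : ℂ) ≠ 0 := by exact_mod_cast (Real.sqrt_pos.2 hn').ne'
    rw [hY, scaled, smul_smul, Complex.ofReal_inv, mul_inv_cancel₀ this, one_smul]
  have h := trace_psd_le hf x hQ
  have e2 : (f x * (P * P)).trace.re =
      √n * (4 * (Y ^ (2 * k + 1)).trace + 4 * (Y ^ (2 * k + 2)).trace + (Y ^ (2 * k + 3)).trace).re := by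
    rw [hX, e, smul_mul_assoc, Matrix.trace_smul, smul_eq_mul, Complex.re_ofReal_mul]
    have h4 : (4 : Matrix (Fin n) (Fin n) ℂ) = (4 : ℂ) • 1 := by
      ext i j; simp [Matrix.ofNat_apply, Matrix.one_apply]
    simp only [h4, smul_mul_assoc, one_mul, mul_add, mul_smul_comm, ← pow_succ', Matrix.trace_add,
      Matrix.trace_smul, smul_eq_mul]
  have e3 : (P * P).trace.re =
      (4 * (Y ^ (2 * k)).trace + 4 * (Y ^ (2 * k + 1)).trace + (Y ^ (2 * k + 2)).trace).re := by
    have h4 : (4 : Matrix (Fin n) (Fin n) ℂ) = (4 : ℂ) • 1 := by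
      ext i j; simp [Matrix.ofNat_apply, Matrix.one_apply]
    rw [e]
    simp only [h4, smul_mul_assoc, one_mul, Matrix.trace_add, Matrix.trace_smul, smul_eq_mul]
  rw [e2, e3] at h
  have hl : ∀ u v w : ℂ, (4 * ((n : ℂ)⁻¹ * u) + 4 * ((n : ℂ)⁻¹ * v) + (n : ℂ)⁻¹ * w).re =
      (n : ℝ)⁻¹ * (4 * u + 4 * v + w).re := by
    intro u v w
    rw [← Complex.re_ofReal_mul]; congr 1; push_cast; ring
  simp only [trN, ← hY, hl]
  rw [div_mul_eq_mul_div, le_div_iff₀ (Real.sqrt_pos.2 hn')]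
  have := mul_le_mul_of_nonneg_left h (inv_nonneg.2 hn'.le)
  linarith

lemma supp_scaled_pow_le (hn : 0 < n) (hf : IsHermParam f) (x : EuclideanSpace ℝ (Fin N)) {K : ℕ}
    (hK : 1 ≤ K) : (suppF f x / √n) ^ (2 * K) ≤ n * (trN f (2 * K) x).re := by
  have hn' : (n : ℂ) ≠ 0 := by exact_mod_cast hn.ne'
  have h := supp_pow_le hn hf x hK
  have e : (n : ℝ) * (trN f (2 * K) x).re = ((√n)⁻¹) ^ (2 * K) * (f x ^ (2 * K)).trace.re := by
    rw [trN, scaled, smul_pow, Matrix.trace_smul, smul_eq_mul, ← Complex.re_ofReal_mul,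
      ← Complex.re_ofReal_mul]
    push_cast
    rw [mul_inv_cancel_left₀ hn']
  rw [e, div_eq_mul_inv, mul_pow, mul_comm]
  gcongr

lemma trN_two (hn : 0 < n) (hf : IsHermParam f) (x : EuclideanSpace ℝ (Fin N)) :
    trN f 2 x = (((‖x‖ / n) ^ 2 : ℝ) : ℂ) := by
  have hn' : (n : ℂ) ≠ 0 := by exact_mod_cast hn.ne'
  rw [trN, scaled, smul_pow, Matrix.trace_smul, smul_eq_mul, pow_two (f x),
    ← trace_mul_real (hf.herm x) (hf.herm x), hf.inner_eq, real_inner_self_eq_norm_sq, pow_two,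
    inv_sqrt_sq]
  push_cast
  field_simp

end
end

/-! ### Polar coordinates -/

noncomputable section

/-- Integration in polar coordinates of a radial function times a positively homogeneous function of
degree one. -/
lemma integral_polar {N : ℕ} (hN : 0 < N) (g : ℝ → ℝ) {h : EuclideanSpace ℝ (Fin N) → ℝ}
    (hh : ∀ x, ∀ c : ℝ, 0 ≤ c → h (c • x) = c * h x) :
    ∫ x, g ‖x‖ * h x = (∫ u, h u ∂(volume : Measure (EuclideanSpace ℝ (Fin N))).toSphere) *
      ∫ r : Set.Ioi (0 : ℝ), g r * r ∂(Measure.volumeIoiPow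
        (Module.finrank ℝ (EuclideanSpace ℝ (Fin N)) - 1)) := by
  have : Nonempty (Fin N) := ⟨⟨0, hN⟩⟩
  have : Nontrivial (EuclideanSpace ℝ (Fin N)) := inferInstance
  calc ∫ x, g ‖x‖ * h x
      = ∫ x : ({(0)}ᶜ : Set (EuclideanSpace ℝ (Fin N))), g ‖x.1‖ * h x.1
          ∂(volume.comap Subtype.val) := by
        rw [integral_subtype_comap (measurableSet_singleton _).compl fun x => g ‖x‖ * h x,
          restrict_compl_singleton]
    _ = ∫ p : sphere (0 : EuclideanSpace ℝ (Fin N)) 1 × Set.Ioi (0 : ℝ), h p.1 * (g p.2 * p.2)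
          ∂((volume : Measure (EuclideanSpace ℝ (Fin N))).toSphere.prod (Measure.volumeIoiPow
        (Module.finrank ℝ (EuclideanSpace ℝ (Fin N)) - 1))) := by
        rw [← (volume : Measure (EuclideanSpace ℝ (Fin N))).measurePreserving_homeomorphUnitSphereProd.integral_comp
          (Homeomorph.measurableEmbedding _)]
        refine integral_congr_ae (Filter.Eventually.of_forall fun x => ?_)
        have hx : ‖x.1‖ ≠ 0 := norm_ne_zero_iff.2 x.2
        have e : h x.1 = ‖x.1‖ * h (‖x.1‖⁻¹ • x.1) := by
          rw [← hh _ _ (norm_nonneg _), smul_smul, mul_inv_cancel₀ hx, one_smul]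
        simp only [homeomorphUnitSphereProd_apply_snd_coe, homeomorphUnitSphereProd_apply_fst_coe]
        rw [e]; ring
    _ = _ := integral_prod_mul (fun u : sphere (0 : EuclideanSpace ℝ (Fin N)) 1 => h u)
        (fun r : Set.Ioi (0 : ℝ) => g r * r)

/-- Integration in polar coordinates of a positively homogeneous function against the Gaussian
measure. -/
lemma gauss_polar {N : ℕ} (hN : 0 < N) {h : EuclideanSpace ℝ (Fin N) → ℝ}
    (hh : ∀ x, ∀ c : ℝ, 0 ≤ c → h (c • x) = c * h x) :
    ∫ x, h x ∂(gaussM N) = (∫ u, h u ∂(sphereUniform N)) * ∫ x, ‖x‖ ∂(gaussM N) := by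
  have : Nonempty (Fin N) := ⟨⟨0, hN⟩⟩
  have : Nontrivial (EuclideanSpace ℝ (Fin N)) := inferInstance
  rw [integral_gaussM, integral_gaussM]
  simp only [gaussD, smul_eq_mul]
  rw [integral_polar hN (fun r => (gaussZ N)⁻¹ * Real.exp (-r ^ 2 / 2)) hh,
    integral_polar hN (fun r => (gaussZ N)⁻¹ * Real.exp (-r ^ 2 / 2)) (h := fun x => ‖x‖)
      (fun x c hc => by rw [norm_smul, Real.norm_of_nonneg hc])]
  set I := ∫ r : Set.Ioi (0 : ℝ), (gaussZ N)⁻¹ * Real.exp (-(r : ℝ) ^ 2 / 2) * r ∂(Measure.volumeIoiPow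
        (Module.finrank ℝ (EuclideanSpace ℝ (Fin N)) - 1))
  set σ := (volume : Measure (EuclideanSpace ℝ (Fin N))).toSphere with hσ
  have hu : ∫ u : sphere (0 : EuclideanSpace ℝ (Fin N)) 1, ‖(u : EuclideanSpace ℝ (Fin N))‖ ∂σ =
      σ.real Set.univ := by simp
  have hne : σ.real Set.univ ≠ 0 := by
    rw [Measure.real, ENNReal.toReal_ne_zero]
    exact ⟨by rw [Ne, Measure.measure_univ_eq_zero]; exact Measure.toSphere_ne_zero _,
      measure_ne_top _ _⟩
  rw [hu, sphereUniform, integral_smul_measure, ← hσ, ENNReal.toReal_inv, smul_eq_mul]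
  rw [show (σ Set.univ).toReal = σ.real Set.univ from rfl]
  field_simp

end

/-! ### Bounds for the mean of the support function at fixed dimension -/

noncomputable section
section
variable {n N : ℕ} {f : EuclideanSpace ℝ (Fin N) →ₗ[ℝ] Matrix (Fin n) (Fin n) ℂ}

lemma trN_im (hf : IsHermParam f) (a : ℕ) (x : EuclideanSpace ℝ (Fin N)) : (trN f a x).im = 0 := by
  have h := trace_mul_real ((scaled_herm hf x).pow a) (Matrix.isHermitian_one)
  rw [mul_one] at h
  rw [trN, ← h, ← Complex.ofReal_natCast, ← Complex.ofReal_inv, ← Complex.ofReal_mul,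
    Complex.ofReal_im]

lemma integral_trN_re (a : ℕ) : ∫ x, (trN f a x).re ∂(gaussM N) = (mom f {a}).re := by
  have h := integral_re (𝕜 := ℂ) (polyG_trN (f := f) a).integrable
  simpa [mom, trP] using h

lemma integral_trN_re_sq (hf : IsHermParam f) (a : ℕ) :
    ∫ x, (trN f a x).re ^ 2 ∂(gaussM N) = (mom f {a, a}).re := by
  have h := integral_re (𝕜 := ℂ) (polyG_trP (f := f) {a, a}).integrable
  have e : ∀ x, RCLike.re (trP f {a, a} x) = (trN f a x).re ^ 2 := fun x => by
    simp [trP, trN_im hf, pow_two]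
  simp only [e] at h
  exact h

/-- If the moment of order `2 K` of `scaled f x` is controlled with `2 K ≈ 2 s log n`, the scaled
support function is at most `(2 + 1 / s) (1 + 2 / s)` in mean and in mean square, up to a factor
`1 + 3 / n`. -/
lemma supp_upper (hn : 2 ≤ n) (hf : IsHermParam f) {s : ℕ} (hs : 1 ≤ s)
    (h : ‖mom f {2 * (s * ⌈Real.log n⌉₊)}‖ ≤ (2 + 1 / (s : ℝ)) ^ (2 * (s * ⌈Real.log n⌉₊) + 1)) :
    ∫ x, suppF f x / √n ∂(gaussM N) ≤ (2 + 1 / (s : ℝ)) * (1 + 2 / s) * (1 + 3 / n) ∧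
    ∫ x, (suppF f x / √n) ^ 2 ∂(gaussM N) ≤
      ((2 + 1 / (s : ℝ)) * (1 + 2 / s)) ^ 2 * (1 + 3 / n) := by
  have hn0 : 0 < n := by omega
  have hn' : (0 : ℝ) < n := by exact_mod_cast hn0
  have hs' : (1 : ℝ) ≤ s := by exact_mod_cast hs
  set L := ⌈Real.log n⌉₊ with hL
  have hlog : 0 < Real.log n := Real.log_pos (by exact_mod_cast hn)
  have hL1 : 1 ≤ L := Nat.ceil_pos.2 hlog
  set K := s * L with hK
  have hK1 : 1 ≤ K := Nat.one_le_iff_ne_zero.2 (by positivity)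
  set b : ℝ := 2 + 1 / s with hb
  have hb0 : 0 < b := by positivity
  have hb3 : b ≤ 3 := by
    have : 1 / (s : ℝ) ≤ 1 := by rw [div_le_one (by positivity)]; exact hs'
    linarith
  set c : ℝ := 1 + 2 / s with hc
  have hc0 : 0 < c := by positivity
  set B := b * c with hB
  have hB0 : 0 < B := by positivity
  have hpH : PolyG (fun x => suppF f x / √n) := by
    simp only [div_eq_mul_inv]
    exact (polyG_supp hn0 hf).mul (PolyG.const _)
  have hH0 : ∀ x, 0 ≤ suppF f x / √n := fun x => div_nonneg (supp_nonneg hn0 hf x) (Real.sqrt_nonneg _)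
  -- the choice of `K` makes `c ^ (2 K)` at least `n ^ 2`
  have hcn : (n : ℝ) ^ 2 ≤ c ^ (2 * K) := by
    have h1 : (3 : ℝ) ≤ c ^ s := by
      have := one_add_mul_le_pow (a := 2 / (s : ℝ)) (by linarith [show 0 ≤ 2 / (s : ℝ) by positivity]) s
      calc (3 : ℝ) = 1 + s * (2 / s) := by field_simp; norm_num
        _ ≤ _ := this
    have h2 : (n : ℝ) ≤ Real.exp 1 ^ L := by
      rw [← Real.exp_nat_mul, mul_one]
      calc (n : ℝ) = Real.exp (Real.log n) := (Real.exp_log hn').symm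
        _ ≤ _ := Real.exp_le_exp.2 (Nat.le_ceil _)
    calc (n : ℝ) ^ 2 ≤ (Real.exp 1 ^ L) ^ 2 := by gcongr
      _ ≤ ((c ^ s) ^ L) ^ 2 := by gcongr; linarith [Real.exp_one_lt_three]
      _ = _ := by rw [← pow_mul, ← pow_mul]; congr 1; rw [hK]; ring
  have hE : ∫ x, (suppF f x / √n) ^ (2 * K) ∂(gaussM N) ≤ B ^ (2 * K) * (3 / n) := by
    calc ∫ x, (suppF f x / √n) ^ (2 * K) ∂(gaussM N)
        ≤ ∫ x, n * (trN f (2 * K) x).re ∂(gaussM N) :=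
          integral_mono (hpH.pow _).integrable
            ((PolyG.const _).mul (polyG_trN (f := f) (2 * K)).re).integrable
            fun x => supp_scaled_pow_le hn0 hf x hK1
      _ = n * (mom f {2 * K}).re := by rw [integral_const_mul, integral_trN_re]
      _ ≤ n * b ^ (2 * K + 1) := by
          gcongr; exact (Complex.re_le_norm _).trans h
      _ ≤ n * (b ^ (2 * K) * 3) := by rw [pow_succ]; gcongr
      _ = n ^ 2 * (b ^ (2 * K) * (3 / n)) := by field_simp
      _ ≤ c ^ (2 * K) * (b ^ (2 * K) * (3 / n)) := by gcongr
      _ = _ := by rw [hB, mul_pow]; ring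
  have hE' : ∫ x, 1 + (suppF f x / √n) ^ (2 * K) / B ^ (2 * K) ∂(gaussM N) ≤ 1 + 3 / n := by
    rw [integral_add (integrable_const _) ((hpH.pow _).integrable.div_const _), integral_div]
    simp only [integral_const, probReal_univ, smul_eq_mul, one_mul]
    refine add_le_add_right ?_ 1
    rw [div_le_iff₀ (by positivity)]
    linarith
  have hInt : Integrable (fun x => 1 + (suppF f x / √n) ^ (2 * K) / B ^ (2 * K)) (gaussM N) :=
    (integrable_const _).add ((hpH.pow _).integrable.div_const _)
  have hpow : ∀ j, 1 ≤ j → j ≤ 2 * K → ∀ x,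
      (suppF f x / √n) ^ j ≤ B ^ j * (1 + (suppF f x / √n) ^ (2 * K) / B ^ (2 * K)) := by
    intro j hj hjK x
    set u := (suppF f x / √n) / B with hu
    have hu0 : 0 ≤ u := div_nonneg (hH0 x) hB0.le
    have e : suppF f x / √n = B * u := by rw [hu]; field_simp
    rw [← div_pow, ← hu, e, mul_pow]
    gcongr
    rcases le_total u 1 with h1 | h1
    · exact (pow_le_one₀ hu0 h1).trans (le_add_of_nonneg_right (by positivity))
    · exact (pow_le_pow_right₀ h1 hjK).trans (by linarith)
  have main : ∀ j, 1 ≤ j → j ≤ 2 * K →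
      ∫ x, (suppF f x / √n) ^ j ∂(gaussM N) ≤ B ^ j * (1 + 3 / n) := by
    intro j hj hjK
    calc ∫ x, (suppF f x / √n) ^ j ∂(gaussM N)
        ≤ ∫ x, B ^ j * (1 + (suppF f x / √n) ^ (2 * K) / B ^ (2 * K)) ∂(gaussM N) :=
          integral_mono (hpH.pow _).integrable (hInt.const_mul _) (hpow j hj hjK)
      _ = B ^ j * ∫ x, (1 + (suppF f x / √n) ^ (2 * K) / B ^ (2 * K)) ∂(gaussM N) :=
          integral_const_mul _ _
      _ ≤ _ := by gcongr
  exact ⟨by simpa using main 1 le_rfl (by omega), main 2 (by omega) (by omega)⟩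

/-- The lower bound on the mean of the scaled support function given by the test state, with the
random denominator replaced by a constant `q` at the price of a variance term. -/
lemma supp_lower (hn : 0 < n) (hf : IsHermParam f) (k : ℕ) {q η : ℝ} (hη : 0 < η) :
    (4 * mom f {2 * k + 1} + 4 * mom f {2 * k + 2} + mom f {2 * k + 3}).re ≤
      q * ∫ x, suppF f x / √n ∂(gaussM N) + η * ∫ x, (suppF f x / √n) ^ 2 ∂(gaussM N) +
      η⁻¹ * ∫ x, ((4 * trN f (2 * k) x + 4 * trN f (2 * k + 1) x + trN f (2 * k + 2) x).re - q) ^ 2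
        ∂(gaussM N) := by
  have hpH : PolyG (fun x => suppF f x / √n) := by
    simp only [div_eq_mul_inv]
    exact (polyG_supp hn hf).mul (PolyG.const _)
  have hz : ∀ a b c : ℕ, PolyG (fun x => 4 * trN f a x + 4 * trN f b x + trN f c x) := fun a b c =>
    (((PolyG.const _).mul (polyG_trN a)).add ((PolyG.const _).mul (polyG_trN b))).add (polyG_trN c)
  have hV : PolyG (fun x =>
      ((4 * trN f (2 * k) x + 4 * trN f (2 * k + 1) x + trN f (2 * k + 2) x).re - q) ^ 2) :=
    ((hz _ _ _).re.sub (PolyG.const q)).pow 2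
  have e1 : (4 * mom f {2 * k + 1} + 4 * mom f {2 * k + 2} + mom f {2 * k + 3}).re =
      ∫ x, (4 * trN f (2 * k + 1) x + 4 * trN f (2 * k + 2) x + trN f (2 * k + 3) x).re
        ∂(gaussM N) := by
    have h := integral_re (𝕜 := ℂ) (hz (2 * k + 1) (2 * k + 2) (2 * k + 3)).integrable
    refine Eq.trans ?_ h.symm
    rw [integral_add, integral_add, integral_const_mul, integral_const_mul]
    · simp [mom, trP]
    · exact (polyG_trN _).integrable.const_mul _
    · exact (polyG_trN _).integrable.const_mul _
    · exact ((polyG_trN _).integrable.const_mul _).add ((polyG_trN _).integrable.const_mul _)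
    · exact (polyG_trN _).integrable
  have hqH : Integrable (fun x => q * (suppF f x / √n) + η * (suppF f x / √n) ^ 2) (gaussM N) :=
    (hpH.integrable.const_mul _).add ((hpH.pow 2).integrable.const_mul _)
  rw [e1, ← integral_const_mul, ← integral_const_mul, ← integral_const_mul,
    ← integral_add (hpH.integrable.const_mul _) ((hpH.pow 2).integrable.const_mul _),
    ← integral_add hqH (hV.integrable.const_mul _)]
  refine integral_mono (hz _ _ _).re.integrable
    (hqH.add (hV.integrable.const_mul _)) fun x => ?_
  refine (test_state hn hf x k).trans ?_
  set H := suppF f x / √n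
  set Q := (4 * trN f (2 * k) x + 4 * trN f (2 * k + 1) x + trN f (2 * k + 2) x).re
  -- `2 H (Q - q) ≤ η H² + (Q - q)² / η`
  have h1 : 0 ≤ η⁻¹ * (η * H - (Q - q)) ^ 2 := by positivity
  have h2 : η⁻¹ * (η * H - (Q - q)) ^ 2 = η * H ^ 2 - 2 * (H * (Q - q)) + η⁻¹ * (Q - q) ^ 2 := by
    field_simp; ring
  have h3 : 0 ≤ η * H ^ 2 := by positivity
  have h4 : 0 ≤ η⁻¹ * (Q - q) ^ 2 := by positivity
  nlinarith
end
end

/-! ### Asymptotics -/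

noncomputable section
lemma mom_re_tendsto
    (f : ∀ n : ℕ, EuclideanSpace ℝ (Fin (n ^ 2 - 1)) →ₗ[ℝ] Matrix (Fin n) (Fin n) ℂ)
    (hf : ∀ n, IsHermParam (f n))
    (m : Multiset ℕ) :
    Filter.Tendsto (fun n => (mom (f n) m).re) Filter.atTop (nhds (m.map (tau 0)).prod) := by
  have h := (Complex.continuous_re.tendsto _).comp (mom_tendsto f hf m)
  have e : ((m.map fun a => (tau 0 a : ℂ)).prod).re = (m.map (tau 0)).prod := by
    have : (m.map fun a => (tau 0 a : ℂ)).prod = (((m.map (tau 0)).prod : ℝ) : ℂ) := by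
      have h := map_multiset_prod Complex.ofRealHom (m.map (tau 0))
      rw [Multiset.map_map] at h
      exact h.symm
    rw [this, Complex.ofReal_re]
  rw [e] at h
  exact h

/-- The normalized traces concentrate around the moments of the semicircle law. -/
lemma variance_tendsto
    (f : ∀ n : ℕ, EuclideanSpace ℝ (Fin (n ^ 2 - 1)) →ₗ[ℝ] Matrix (Fin n) (Fin n) ℂ)
    (hf : ∀ n, IsHermParam (f n))
    (a : ℕ) :
    Filter.Tendsto (fun n => ∫ x, ((trN (f n) a x).re - tau 0 a) ^ 2 ∂(gaussM (n ^ 2 - 1)))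
      Filter.atTop (nhds 0) := by
  have h := ((mom_re_tendsto f hf {a, a}).sub ((mom_re_tendsto f hf {a}).const_mul (2 * tau 0 a))).add_const
    (tau 0 a ^ 2)
  have e0 : (Multiset.map (tau 0) {a, a}).prod - 2 * tau 0 a * (Multiset.map (tau 0) {a}).prod +
      tau 0 a ^ 2 = 0 := by
    simp; ring
  rw [e0] at h
  refine h.congr fun n => ?_
  have hp := (polyG_trN (f := f n) a).re
  rw [← integral_trN_re, ← integral_trN_re_sq (hf n), ← integral_const_mul,
    ← integral_sub (hp.pow 2).integrable (hp.integrable.const_mul _)]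
  have hi : Integrable (fun x => (trN (f n) a x).re ^ 2 - 2 * tau 0 a * (trN (f n) a x).re)
      (gaussM (n ^ 2 - 1)) := (hp.pow 2).integrable.sub (hp.integrable.const_mul _)
  have hc : tau 0 a ^ 2 = ∫ _x : EuclideanSpace ℝ (Fin (n ^ 2 - 1)), tau 0 a ^ 2
      ∂(gaussM (n ^ 2 - 1)) := by simp
  rw [hc, ← integral_add hi (integrable_const _)]
  refine integral_congr_ae (Filter.Eventually.of_forall fun x => ?_)
  simp only
  ring

/-- Concentration of the denominator `tr p(Y)²` in `test_state`. -/
lemma variance_comb_tendsto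
    (f : ∀ n : ℕ, EuclideanSpace ℝ (Fin (n ^ 2 - 1)) →ₗ[ℝ] Matrix (Fin n) (Fin n) ℂ)
    (hf : ∀ n, IsHermParam (f n))
    (k : ℕ) :
    Filter.Tendsto (fun n => ∫ x, ((4 * trN (f n) (2 * k) x + 4 * trN (f n) (2 * k + 1) x +
      trN (f n) (2 * k + 2) x).re - (4 * catalan k + catalan (k + 1))) ^ 2 ∂(gaussM (n ^ 2 - 1)))
      Filter.atTop (nhds 0) := by
  have h := (((variance_tendsto f hf (2 * k)).const_mul 48).add
    ((variance_tendsto f hf (2 * k + 1)).const_mul 48)).add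
    ((variance_tendsto f hf (2 * k + 2)).const_mul 3)
  simp only [mul_zero, add_zero] at h
  refine squeeze_zero (fun n => integral_nonneg fun x => sq_nonneg _) (fun n => ?_) h
  have hp : ∀ a, PolyG (fun x => ((trN (f n) a x).re - tau 0 a) ^ 2) := fun a =>
    ((polyG_trN (f := f n) a).re.sub (PolyG.const _)).pow 2
  have hi : ∀ (c : ℝ) a, Integrable (fun x => c * ((trN (f n) a x).re - tau 0 a) ^ 2)
      (gaussM (n ^ 2 - 1)) := fun c a => (hp a).integrable.const_mul c
  have hi2 : Integrable (fun x => 48 * ((trN (f n) (2 * k) x).re - tau 0 (2 * k)) ^ 2 +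
      48 * ((trN (f n) (2 * k + 1) x).re - tau 0 (2 * k + 1)) ^ 2) (gaussM (n ^ 2 - 1)) :=
    (hi _ _).add (hi _ _)
  have hz : PolyG (fun x => 4 * trN (f n) (2 * k) x + 4 * trN (f n) (2 * k + 1) x +
      trN (f n) (2 * k + 2) x) :=
    (((PolyG.const _).mul (polyG_trN _)).add ((PolyG.const _).mul (polyG_trN _))).add (polyG_trN _)
  rw [← integral_const_mul, ← integral_const_mul, ← integral_const_mul,
    ← integral_add (hi _ _) (hi _ _), ← integral_add hi2 (hi _ _)]
  refine integral_mono ((hz.re.sub (PolyG.const _)).pow 2).integrable (hi2.add (hi _ _)) fun x => ?_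
  have t0 := (tau_zero_eq k).1
  have t1 := (tau_zero_eq k).2
  have t2 := (tau_zero_eq (k + 1)).1
  rw [show 2 * (k + 1) = 2 * k + 2 by ring] at t2
  have hre : (4 * trN (f n) (2 * k) x + 4 * trN (f n) (2 * k + 1) x + trN (f n) (2 * k + 2) x).re =
      4 * (trN (f n) (2 * k) x).re + 4 * (trN (f n) (2 * k + 1) x).re +
        (trN (f n) (2 * k + 2) x).re := by simp
  simp only [hre, t0, t1, t2]
  set u := (trN (f n) (2 * k) x).re - catalan k with hu
  set v := (trN (f n) (2 * k + 1) x).re - 0 with hv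
  set w := (trN (f n) (2 * k + 2) x).re - catalan (k + 1) with hw
  calc _ = (4 * u + 4 * v + w) ^ 2 := by rw [hu, hv, hw]; ring
    _ ≤ _ := by nlinarith [sq_nonneg (4 * u - 4 * v), sq_nonneg (4 * u - w), sq_nonneg (4 * v - w)]

/-- The norm of a standard Gaussian vector in dimension `n ^ 2 - 1` is `n` to leading order. As
`r² = (‖x‖ / n)²` is `trN (f n) 2`, the mean of `r` is squeezed by those of `(3 r² - r⁴) / 2` and
`(1 + r²) / 2`. -/
lemma norm_mean_tendsto
    (f : ∀ n : ℕ, EuclideanSpace ℝ (Fin (n ^ 2 - 1)) →ₗ[ℝ] Matrix (Fin n) (Fin n) ℂ)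
    (hf : ∀ n, IsHermParam (f n)) :
    Filter.Tendsto (fun n : ℕ => ∫ x, ‖x‖ / n ∂(gaussM (n ^ 2 - 1))) Filter.atTop (nhds 1) := by
  have t2 : tau 0 2 = 1 := by have := (tau_zero_eq 1).1; simpa using this
  have h2 := mom_re_tendsto f hf {2}
  have h4 := mom_re_tendsto f hf {2, 2}
  simp only [Multiset.map_singleton, Multiset.prod_singleton, t2] at h2
  have e4 : (Multiset.map (tau 0) {2, 2}).prod = 1 := by simp [t2]
  rw [e4] at h4
  have hlo := ((h2.const_mul 3).sub h4).div_const 2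
  have hup := (h2.const_add 1).div_const 2
  rw [show ((3 : ℝ) * 1 - 1) / 2 = 1 by norm_num] at hlo
  rw [show ((1 : ℝ) + 1) / 2 = 1 by norm_num] at hup
  have hsq : ∀ n : ℕ, 0 < n → ∀ x, (trN (f n) 2 x).re = (‖x‖ / n) ^ 2 := fun n hn x => by
    rw [trN_two hn (hf n), Complex.ofReal_re]
  have hR : ∀ n : ℕ, PolyG (fun x : EuclideanSpace ℝ (Fin (n ^ 2 - 1)) => ‖x‖ / n) := fun n => by
    simp only [div_eq_mul_inv]
    exact PolyG.norm_id.mul (PolyG.const _)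
  refine tendsto_of_tendsto_of_tendsto_of_le_of_le' hlo hup ?_ ?_
  · filter_upwards [Filter.eventually_gt_atTop 0] with n hn
    have hp := (polyG_trN (f := f n) 2).re
    rw [← integral_trN_re, ← integral_trN_re_sq (hf n), ← integral_const_mul,
      ← integral_sub (hp.integrable.const_mul _) (hp.pow 2).integrable, ← integral_div]
    refine integral_mono (((hp.integrable.const_mul _).sub (hp.pow 2).integrable).div_const _)
      (hR n).integrable fun x => ?_
    simp only [hsq n hn]
    set r := ‖x‖ / n
    have hr : 0 ≤ r := by positivity
    -- `2 r - 3 r² + r⁴ = r (r - 1)² (r + 2)`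
    have : 0 ≤ r * (r - 1) ^ 2 * (r + 2) := by positivity
    nlinarith
  · filter_upwards [Filter.eventually_gt_atTop 0] with n hn
    have hp := (polyG_trN (f := f n) 2).re
    have h1 : (1 : ℝ) = ∫ _x : EuclideanSpace ℝ (Fin (n ^ 2 - 1)), (1 : ℝ)
      ∂(gaussM (n ^ 2 - 1)) := by simp
    rw [← integral_trN_re]
    conv_rhs => rw [h1]
    rw [← integral_add (integrable_const _) hp.integrable, ← integral_div]
    refine integral_mono (hR n).integrable
      (((integrable_const _).add hp.integrable).div_const _) fun x => ?_
    simp only [hsq n hn]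
    nlinarith [sq_nonneg (‖x‖ / n - 1)]

/-- The moment method for the largest eigenvalue. -/
lemma supp_mean_upper
    (f : ∀ n : ℕ, EuclideanSpace ℝ (Fin (n ^ 2 - 1)) →ₗ[ℝ] Matrix (Fin n) (Fin n) ℂ)
    (hf : ∀ n, IsHermParam (f n))
    {ε : ℝ} (hε : 0 < ε) :
    ∀ᶠ n : ℕ in Filter.atTop, ∫ x, suppF (f n) x / √n ∂(gaussM (n ^ 2 - 1)) < 2 + ε := by
  have hinv := tendsto_one_div_atTop_nhds_zero_nat (𝕜 := ℝ)
  have hB : Filter.Tendsto (fun s : ℕ => (2 + 1 / (s : ℝ)) * (1 + 2 * (1 / (s : ℝ)))) Filter.atTop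
      (nhds ((2 + 0) * (1 + 2 * 0))) := (hinv.const_add 2).mul ((hinv.const_mul 2).const_add 1)
  obtain ⟨s, hs, hs1⟩ := ((hB.eventually_lt_const (u := 2 + ε) (by norm_num; exact hε)).and
    (Filter.eventually_ge_atTop 1)).exists
  have hn3 : Filter.Tendsto (fun n : ℕ => (2 + 1 / (s : ℝ)) * (1 + 2 * (1 / (s : ℝ))) *
      (1 + 3 * (1 / (n : ℝ)))) Filter.atTop
      (nhds ((2 + 1 / (s : ℝ)) * (1 + 2 * (1 / (s : ℝ))) * (1 + 3 * 0))) :=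
    ((hinv.const_mul 3).const_add 1).const_mul _
  filter_upwards [even_mom_bound hs1, Filter.eventually_ge_atTop 2,
    hn3.eventually_lt_const (u := 2 + ε) (by simpa using hs)] with n h1 hn h3
  refine (supp_upper hn (hf n) hs1 (h1 _ _ (hf n))).1.trans_lt ?_
  simpa only [mul_one_div] using h3

/-- A crude second moment bound; the constant is `9 ^ 2 * 3`, from `supp_upper` with `s = 1`. -/
lemma supp_sq_bound
    (f : ∀ n : ℕ, EuclideanSpace ℝ (Fin (n ^ 2 - 1)) →ₗ[ℝ] Matrix (Fin n) (Fin n) ℂ)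
    (hf : ∀ n, IsHermParam (f n)) :
    ∀ᶠ n : ℕ in Filter.atTop,
      ∫ x, (suppF (f n) x / √n) ^ 2 ∂(gaussM (n ^ 2 - 1)) ≤ 243 := by
  filter_upwards [even_mom_bound le_rfl, Filter.eventually_ge_atTop 2] with n h1 hn
  refine (supp_upper hn (hf n) le_rfl (h1 _ _ (hf n))).2.trans ?_
  have : (3 : ℝ) / n ≤ 2 := by
    have : (2 : ℝ) ≤ n := by exact_mod_cast hn
    rw [div_le_iff₀ (by linarith)]; linarith
  norm_num
  linarith

/-- The limiting Rayleigh quotients `∫ y p(y)² / ∫ p(y)²` of the semicircle law, for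
`p(y) = y ^ k (2 + y)`, come arbitrarily close to the upper edge `2`. -/
lemma catalan_ratio {ε : ℝ} (hε : 0 < ε) :
    ∃ k : ℕ, (2 - ε) * (4 * catalan k + catalan (k + 1)) ≤ 4 * (catalan (k + 1) : ℝ) := by
  obtain ⟨k, hk⟩ := exists_nat_gt (3 / ε)
  refine ⟨k, ?_⟩
  have h1 : ((k : ℝ) + 2) * catalan (k + 1) = 2 * (2 * k + 1) * catalan k := by
    have a : ((k + 1 : ℕ) + 1) * catalan (k + 1) = Nat.centralBinom (k + 1) :=
      succ_mul_catalan_eq_centralBinom (k + 1)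
    have b : (k + 1) * catalan k = Nat.centralBinom k := succ_mul_catalan_eq_centralBinom k
    have c := Nat.succ_mul_centralBinom_succ k
    rw [← a, ← b] at c
    have c' : ((k : ℝ) + 1) * ((k + 1 + 1) * catalan (k + 1)) =
        2 * (2 * k + 1) * ((k + 1) * catalan k) := by exact_mod_cast c
    have hk1 : (k : ℝ) + 1 ≠ 0 := by positivity
    apply mul_left_cancel₀ hk1
    linarith
  have h0 : (0 : ℝ) ≤ catalan k := by positivity
  have h0' : (0 : ℝ) ≤ catalan (k + 1) := by positivity
  rw [div_lt_iff₀ hε] at hk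
  have hk2 : (0 : ℝ) < (k : ℝ) + 2 := by positivity
  refine le_of_mul_le_mul_left ?_ hk2
  have h5 : (0 : ℝ) ≤ (k * ε - 3) * catalan k := mul_nonneg (by linarith) h0
  have h6 : 0 ≤ ε * catalan k := by positivity
  have h7 : 0 ≤ ε * ((k + 2) * catalan (k + 1)) := by positivity
  nlinarith

/-- The largest eigenvalue reaches the edge of the semicircle law in mean, by comparison with the test
states of `test_state`. -/
lemma supp_mean_lower
    (f : ∀ n : ℕ, EuclideanSpace ℝ (Fin (n ^ 2 - 1)) →ₗ[ℝ] Matrix (Fin n) (Fin n) ℂ)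
    (hf : ∀ n, IsHermParam (f n))
    {ε : ℝ} (hε : 0 < ε) :
    ∀ᶠ n : ℕ in Filter.atTop, 2 - 4 * ε < ∫ x, suppF (f n) x / √n ∂(gaussM (n ^ 2 - 1)) := by
  obtain ⟨k, hk⟩ := catalan_ratio hε
  set q : ℝ := 4 * catalan k + catalan (k + 1) with hq
  have hq1 : 1 ≤ q := by
    have h := catalan_ge k
    have h0 : (0 : ℝ) < catalan k := lt_of_lt_of_le (by positivity) h
    have h1 : (1 : ℝ) ≤ catalan k := by exact_mod_cast (by exact_mod_cast h0 : 0 < catalan k)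
    have : (0 : ℝ) ≤ catalan (k + 1) := by positivity
    linarith
  set η := ε / 243 with hη
  have hη0 : 0 < η := by positivity
  have hS : Filter.Tendsto (fun n : ℕ => (4 * mom (f n) {2 * k + 1} + 4 * mom (f n) {2 * k + 2} +
      mom (f n) {2 * k + 3}).re) Filter.atTop (nhds (4 * catalan (k + 1))) := by
    have h := (((mom_re_tendsto f hf {2 * k + 1}).const_mul 4).add
      ((mom_re_tendsto f hf {2 * k + 2}).const_mul 4)).add (mom_re_tendsto f hf {2 * k + 3})
    simp only [Multiset.map_singleton, Multiset.prod_singleton] at h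
    rw [(tau_zero_eq k).2, show 2 * k + 2 = 2 * (k + 1) by ring,
      show 2 * k + 3 = 2 * (k + 1) + 1 by ring, (tau_zero_eq (k + 1)).1, (tau_zero_eq (k + 1)).2,
      mul_zero, zero_add, add_zero] at h
    refine h.congr fun n => ?_
    simp [show 2 * (k + 1) = 2 * k + 2 by ring]
  have hV := (variance_comb_tendsto f hf k).const_mul η⁻¹
  rw [mul_zero] at hV
  filter_upwards [hS.eventually_const_lt (u := 4 * catalan (k + 1) - ε) (by linarith),
    hV.eventually_lt_const hε, supp_sq_bound f hf,
    Filter.eventually_gt_atTop 0] with n h1 h2 h3 hn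
  have h := supp_lower hn (hf n) k (q := q) hη0
  set EH := ∫ x, suppF (f n) x / √n ∂(gaussM (n ^ 2 - 1))
  have h3' : η * ∫ x, (suppF (f n) x / √n) ^ 2 ∂(gaussM (n ^ 2 - 1)) ≤ ε := by
    calc _ ≤ η * 243 := by gcongr
      _ = ε := by rw [hη]; field_simp
  have h4 : q * (2 - ε) - 3 * ε < q * EH := by linarith
  by_contra hcon
  rw [not_lt] at hcon
  have h5 : q * EH ≤ q * (2 - 4 * ε) := by gcongr
  nlinarith

end

/-- The mean width of the set of density matrices on `ℂ^n` satisfies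
`w(D) ∼ 2/√n`, i.e. `√n · w(D) → 2` as `n → ∞`. -/
theorem meanWidth_densityMatrices_asymptotics
    (f : ∀ n : ℕ, EuclideanSpace ℝ (Fin (n ^ 2 - 1)) →ₗ[ℝ] Matrix (Fin n) (Fin n) ℂ)
    (hf : ∀ n, IsHermParam (f n)) :
    Filter.Tendsto (fun n : ℕ => Real.sqrt n * matMeanWidth (f n) (densityMatrices (Fin n)))
      Filter.atTop (nhds 2) := by
  have hH : Filter.Tendsto (fun n : ℕ => ∫ x, suppF (f n) x / √n ∂(gaussM (n ^ 2 - 1)))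
      Filter.atTop (nhds 2) := by
    refine tendsto_order.2 ⟨fun a ha => ?_, fun b hb => ?_⟩
    · filter_upwards [supp_mean_lower f hf (ε := (2 - a) / 4) (by linarith)] with n hn
      linarith
    · filter_upwards [supp_mean_upper f hf (ε := b - 2) (by linarith)] with n hn
      linarith
  have hR := norm_mean_tendsto f hf
  have h := hH.div hR one_ne_zero
  rw [div_one] at h
  refine h.congr' ?_
  filter_upwards [Filter.eventually_ge_atTop 2, hR.eventually_ne one_ne_zero] with n hn hne
  have hN : 0 < n ^ 2 - 1 := by
    have : 2 ^ 2 ≤ n ^ 2 := Nat.pow_le_pow_left hn 2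
    omega
  have hn' : (0 : ℝ) < n := by exact_mod_cast (by omega : 0 < n)
  have hp := gauss_polar hN (h := suppF (f n)) fun x c hc => supp_smul x hc
  have hw : ∫ u, suppF (f n) u ∂(sphereUniform (n ^ 2 - 1)) =
    matMeanWidth (f n) (densityMatrices (Fin n)) := rfl
  rw [hw] at hp
  simp only [Pi.div_apply]
  rw [integral_div] at hne ⊢
  rw [integral_div, hp]
  set E := ∫ x : EuclideanSpace ℝ (Fin (n ^ 2 - 1)), ‖x‖ ∂(gaussM (n ^ 2 - 1))
  have hE : E ≠ 0 := fun h0 => hne (by rw [h0, zero_div])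
  have hs : √(n : ℝ) ≠ 0 := (Real.sqrt_pos.2 hn').ne'
  field_simp
  rw [Real.sq_sqrt hn'.le]
end
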